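/- Let E, K be two bounded subsets of ℝ^{N×n} and, for each δ > 0, let E_δ, K_δ be sets verifying: (i) for every ε > 0 there exists δ_0 > 0 such that dist(η; E) ≤ ε for all η ∈ E_δ and all δ ∈ (0, δ_0]; (ii) if η ∈ int K then there exists δ_0 > 0 such that η ∈ K_δ for all δ ∈ (0, δ_0]; (iii) for every δ > 0 and every ξ ∈ K_δ there exist I ∈ ℕ and pairs (λ_i, ξ_i), i = 1,…,I, with λ_i > 0, Σ_{i=1}^I λ_i = 1, ξ_i ∈ ℝ^{N×n}, satisfying (H_I(int K)), such that ξ = Σ_{i=1}^I λ_i ξ_i and Σ_{i : ξ_i ∉ E_δ} λ_i < δ. Then int K has the relaxation property with respect to E. -/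

import Mathlib

open MeasureTheory Filter

attribute [local instance] Classical.propDecidable
attribute [local instance] Matrix.frobeniusNormedAddCommGroup Matrix.frobeniusNormedSpace

noncomputable section

/-- The space of real `N × n` matrices. -/
abbrev Mat (N n : ℕ) : Type := Matrix (Fin N) (Fin n) ℝ

/-- A function `f : ℝ^{N×n} → ℝ` is rank one convex. -/
def RankOneConvexFun {N n : ℕ} (f : Mat N n → ℝ) : Prop :=
  ∀ lam ∈ Set.Icc (0:ℝ) 1, ∀ ξ η : Mat N n, (ξ - η).rank = 1 →
    f (lam • ξ + (1 - lam) • η) ≤ lam * f ξ + (1 - lam) * f η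

/-- The hull `Rco_f E`. -/
def RcoF {N n : ℕ} (E : Set (Mat N n)) : Set (Mat N n) :=
  {ξ | ∀ f : Mat N n → ℝ, RankOneConvexFun f → (∀ η ∈ E, f η ≤ 0) → f ξ ≤ 0}

/-- A set of matrices is rank one convex. -/
def RankOneConvexSet {N n : ℕ} (S : Set (Mat N n)) : Prop :=
  ∀ A ∈ S, ∀ B ∈ S, (A - B).rank = 1 → ∀ t ∈ Set.Icc (0:ℝ) 1, t • A + (1 - t) • B ∈ S

/-- The property `(H_I(U))`, phrased on lists of (weight, matrix) pairs. -/
inductive HIProp {N n : ℕ} (U : Set (Mat N n)) : List (ℝ × Mat N n) → Prop where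
  | single (l : ℝ) (ξ : Mat N n) (hξ : ξ ∈ U) : HIProp U [(l, ξ)]
  | pair (l₁ l₂ : ℝ) (ξ₁ ξ₂ : Mat N n) (h₁ : ξ₁ ∈ U) (h₂ : ξ₂ ∈ U)
      (hrank : (ξ₁ - ξ₂).rank = 1) : HIProp U [(l₁, ξ₁), (l₂, ξ₂)]
  | step (L rest : List (ℝ × Mat N n)) (l₁ l₂ : ℝ) (ξ₁ ξ₂ : Mat N n)
      (hperm : L.Perm ((l₁, ξ₁) :: (l₂, ξ₂) :: rest)) (hrest : rest ≠ [])
      (h₁ : ξ₁ ∈ U) (h₂ : ξ₂ ∈ U) (hrank : (ξ₁ - ξ₂).rank = 1)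
      (hrec : HIProp U ((l₁ + l₂, ((l₁ + l₂)⁻¹) • (l₁ • ξ₁ + l₂ • ξ₂)) :: rest)) :
      HIProp U L

/-- The family `(λ_i, ξ_i)_{1 ≤ i ≤ I}` satisfies `(H_I(U))`. -/
def SatisfiesH {N n : ℕ} (U : Set (Mat N n)) (I : ℕ) (l : Fin I → ℝ)
    (ξ : Fin I → Mat N n) : Prop :=
  HIProp U (List.ofFn fun i => (l i, ξ i))

/-- The gradient of a map `u : ℝ^n → ℝ^N`, as an `N × n` matrix. -/
def matGrad {N n : ℕ} (u : (Fin n → ℝ) → Fin N → ℝ) (x : Fin n → ℝ) : Mat N n :=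
  LinearMap.toMatrix' (fderiv ℝ u x).toLinearMap

/-- `u` is affine on the set `s`. -/
def AffineOn {N n : ℕ} (u : (Fin n → ℝ) → Fin N → ℝ) (s : Set (Fin n → ℝ)) : Prop :=
  ∃ (A : Mat N n) (b : Fin N → ℝ), ∀ x ∈ s, u x = A.mulVec x + b

/-- `u` is piecewise affine on the open set `Ω`. -/
def PiecewiseAffineOn {N n : ℕ} (u : (Fin n → ℝ) → Fin N → ℝ)
    (Ω : Set (Fin n → ℝ)) : Prop :=
  ContinuousOn u (closure Ω) ∧
  ∃ P : ℕ → Set (Fin n → ℝ),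
    (∀ k, IsOpen (P k)) ∧ (∀ k, P k ⊆ Ω) ∧
    (∀ k l, k ≠ l → Disjoint (P k) (P l)) ∧
    volume (Ω \ ⋃ k, P k) = 0 ∧ ∀ k, AffineOn u (P k)

/-- `u` is piecewise `C¹` on the open set `Ω`. -/
def PiecewiseC1On {N n : ℕ} (u : (Fin n → ℝ) → Fin N → ℝ)
    (Ω : Set (Fin n → ℝ)) : Prop :=
  ContinuousOn u (closure Ω) ∧
  ∃ P : ℕ → Set (Fin n → ℝ),
    (∀ k, IsOpen (P k)) ∧ (∀ k, P k ⊆ Ω) ∧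
    (∀ k l, k ≠ l → Disjoint (P k) (P l)) ∧
    volume (Ω \ ⋃ k, P k) = 0 ∧ ∀ k, ContDiffOn ℝ 1 u (P k)

/-- `u ∈ φ + W₀^{1,∞}(Ω; ℝ^N)`: `u` is Lipschitz on `closure Ω` and agrees with `φ`
on the boundary of `Ω`. -/
def MemW01inf {N n : ℕ} (Ω : Set (Fin n → ℝ)) (φ u : (Fin n → ℝ) → Fin N → ℝ) : Prop :=
  (∃ C : NNReal, LipschitzOnWith C u (closure Ω)) ∧ ∀ x ∈ frontier Ω, u x = φ x

/-- `K` has the relaxation property with respect to `E`. -/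
def HasRelaxationProperty {N n : ℕ} (K E : Set (Mat N n)) : Prop :=
  ∀ Ω : Set (Fin n → ℝ), IsOpen Ω → Bornology.IsBounded Ω →
    ∀ ξ ∈ K, ∀ b : Fin N → ℝ,
      ∃ u : ℕ → (Fin n → ℝ) → Fin N → ℝ,
        (∀ ν, PiecewiseAffineOn (u ν) Ω) ∧
        (∀ ν, MemW01inf Ω (fun x => ξ.mulVec x + b) (u ν)) ∧
        (∀ ν, ∀ᵐ x ∂(volume.restrict Ω), matGrad (u ν) x ∈ E ∪ K) ∧
        (∃ C : NNReal, ∀ ν, LipschitzOnWith C (u ν) (closure Ω)) ∧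
        TendstoUniformlyOn u (fun x => ξ.mulVec x + b) atTop (closure Ω) ∧
        Tendsto (fun ν => ∫ x in Ω, Metric.infDist (matGrad (u ν) x) E) atTop (nhds 0)

/-- The singular values of a square matrix, in nondecreasing order:
the square roots of the eigenvalues of `ξ ξᵀ`, sorted. -/
def singularValues {n : ℕ} (ξ : Matrix (Fin n) (Fin n) ℝ) (i : Fin n) : ℝ :=
  Real.sqrt ((Matrix.isHermitian_mul_conjTranspose_self ξ).eigenvalues
    (Tuple.sort (Matrix.isHermitian_mul_conjTranspose_self ξ).eigenvalues i))

end

section Statements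

open Metric Set

open scoped Topology NNReal ENNReal Function

/-!
Relax the energy density `f = dist(·; E)`: the relaxed energy at `A` is the upper semicontinuous
envelope of the smallest mean of `f` over the gradients of small perturbations of an affine map with
gradient `A`, among the locally affine perturbations with gradients in `U = int K` and a fixed
Lipschitz constant. If `A - B = φ ⊗ a` and `s + t = 1`, then adding to the affine map with gradient
`s A + t B` small roof-shaped functions in the direction `a`, placed on the cells of a Vitali
packing, yields gradients near `A` and near `B` with volume fractions exactly `s` and `t`.
Semicontinuity allows the relaxation to be repeated on the pieces, so the relaxed energy is rank-one
convex. By Jensen's inequality along the splittings in `(H_I)`, it is at most `∑ λᵢ dist(ξᵢ; E)` at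
`∑ λᵢ ξᵢ`. Under the hypotheses these sums become arbitrarily small, so the relaxed energy vanishes
on `int K`, which is the relaxation property.
-/

section Gluing

/-- `v` is a perturbation of `u` in the class of maps used for laminates: it is `M`-Lipschitz on the
whole space, unchanged off `Ω`, and uniformly `ε`-close to `u`. -/
structure IsPerturbation {X Y : Type*} [PseudoMetricSpace X] [PseudoMetricSpace Y] (M : ℝ≥0)
    (Ω : Set X) (ε : ℝ) (u v : X → Y) : Prop where
  lipschitzWith : LipschitzWith M v
  eqOn_compl : EqOn v u Ωᶜ
  dist_le : ∀ x, dist (v x) (u x) ≤ ε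

theorem IsPerturbation.trans {X Y : Type*} [PseudoMetricSpace X] [PseudoMetricSpace Y]
    {M M' : ℝ≥0} {Ω Ω' : Set X} {ε ε' : ℝ} {u v w : X → Y} (huv : IsPerturbation M Ω ε u v)
    (hvw : IsPerturbation M' Ω' ε' v w) (hΩ : Ω' ⊆ Ω) : IsPerturbation M' Ω (ε + ε') u w where
  lipschitzWith := hvw.lipschitzWith
  eqOn_compl := (hvw.eqOn_compl.mono (compl_subset_compl.2 hΩ)).trans huv.eqOn_compl
  dist_le x := by
    linarith [dist_triangle (w x) (v x) (u x), huv.dist_le x, hvw.dist_le x]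

theorem IsPerturbation.mono {X Y : Type*} [PseudoMetricSpace X] [PseudoMetricSpace Y]
    {M : ℝ≥0} {Ω Ω' : Set X} {ε : ℝ} {u v : X → Y} (h : IsPerturbation M Ω ε u v)
    (hΩ : Ω ⊆ Ω') : IsPerturbation M Ω' ε u v :=
  ⟨h.lipschitzWith, h.eqOn_compl.mono (compl_subset_compl.2 hΩ), h.dist_le⟩

variable {E F : Type*} [NormedAddCommGroup E] [NormedSpace ℝ E]

theorem nonempty_segment_inter_frontier {s : Set E} {x y : E} (hx : x ∈ s) (hy : y ∉ s) :
    (segment ℝ x y ∩ frontier s).Nonempty := by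
  by_contra hempty
  have hcover : segment ℝ x y ⊆ interior s ∪ (closure s)ᶜ := fun z hz ↦ by
    by_contra h
    simp only [mem_union, mem_compl_iff, not_or, not_not] at h
    exact hempty ⟨z, hz, h.2, h.1⟩
  have hdisj : Disjoint (interior s) (closure s)ᶜ :=
    disjoint_compl_right_iff_subset.2 interior_subset_closure
  rcases (convex_segment x y).isPreconnected.subset_or_subset isOpen_interior
    isClosed_closure.isOpen_compl hdisj hcover with h | h
  · exact hy (interior_subset (h (right_mem_segment ℝ x y)))
  · exact h (left_mem_segment ℝ x y) (subset_closure hx)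

variable [PseudoMetricSpace F] {M : ℝ≥0}

theorem dist_le_mul_of_mem_segment {f : E → F} {x y z : E} (hz : z ∈ segment ℝ x y)
    (hxz : dist (f x) (f z) ≤ M * dist x z) (hzy : dist (f z) (f y) ≤ M * dist z y) :
    dist (f x) (f y) ≤ M * dist x y := by
  rw [← dist_add_dist_of_mem_segment hz, mul_add]
  exact (dist_triangle _ _ _).trans (add_le_add hxz hzy)

theorem lipschitzWith_piecewise {s : Set E} {f g : E → F} (hf : LipschitzWith M f)
    (hg : LipschitzWith M g) (hfg : EqOn f g (frontier s)) :
    LipschitzWith M (s.piecewise f g) := by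
  have hmixed : ∀ x ∈ s, ∀ y ∉ s,
      dist (s.piecewise f g x) (s.piecewise f g y) ≤ M * dist x y := fun x hx y hy ↦ by
    obtain ⟨z, hz, hzs⟩ := nonempty_segment_inter_frontier hx hy
    have hfz : s.piecewise f g z = f z := by
      by_cases h : z ∈ s
      · exact piecewise_eq_of_mem _ _ _ h
      · rw [piecewise_eq_of_notMem _ _ _ h, hfg hzs]
    apply dist_le_mul_of_mem_segment hz
    · rw [hfz, piecewise_eq_of_mem _ _ _ hx]
      exact hf.dist_le_mul x z
    · rw [hfz, hfg hzs, piecewise_eq_of_notMem _ _ _ hy]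
      exact hg.dist_le_mul z y
  refine LipschitzWith.of_dist_le_mul fun x y ↦ ?_
  by_cases hx : x ∈ s <;> by_cases hy : y ∈ s
  · simpa only [piecewise_eq_of_mem _ _ _ hx, piecewise_eq_of_mem _ _ _ hy]
      using hf.dist_le_mul x y
  · exact hmixed x hx y hy
  · simpa only [dist_comm] using hmixed y hy x hx
  · simpa only [piecewise_eq_of_notMem _ _ _ hx, piecewise_eq_of_notMem _ _ _ hy]
      using hg.dist_le_mul x y

theorem disjoint_frontier_iUnion {X ι : Type*} [TopologicalSpace X] {P : ι → Set X}
    (hP : ∀ i, IsOpen (P i)) (hd : Pairwise (Disjoint on P)) (i : ι) :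
    Disjoint (frontier (P i)) (⋃ j, P j) := by
  refine disjoint_iUnion_right.2 fun j ↦ ?_
  rcases eq_or_ne i j with rfl | hij
  · exact disjoint_frontier_iff_isOpen.2 (hP i)
  · exact ((hd hij).closure_left (hP j)).mono_left frontier_subset_closure

theorem exists_isPerturbation_iUnion {ι : Type*} {P : ι → Set E} (hP : ∀ i, IsOpen (P i))
    (hd : Pairwise (Disjoint on P)) {u : E → F} (hu : LipschitzWith M u) {w : ι → E → F}
    (hw : ∀ i, LipschitzWith M (w i)) (hwu : ∀ i, EqOn (w i) u (frontier (P i))) {ε : ℝ}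
    (hε : 0 ≤ ε) (hdist : ∀ i, ∀ x ∈ P i, dist (w i x) (u x) ≤ ε) :
    ∃ v, IsPerturbation M (⋃ i, P i) ε u v ∧ ∀ i, EqOn v (w i) (P i) := by
  let v : E → F := fun x ↦ if h : ∃ i, x ∈ P i then w h.choose x else u x
  have hvw : ∀ i, EqOn v (w i) (P i) := fun i x hx ↦ by
    have h : ∃ i, x ∈ P i := ⟨i, hx⟩
    have hi : h.choose = i := by
      by_contra hne
      exact disjoint_left.1 (hd hne) h.choose_spec hx
    simp only [v, dif_pos h, hi]
  have hvu : EqOn v u (⋃ i, P i)ᶜ := fun x hx ↦ dif_neg (mt mem_iUnion.2 hx)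
  have hlocal : ∀ i, ∀ x ∈ P i, ∀ z ∉ ⋃ i, P i, dist (v x) (v z) ≤ M * dist x z := by
    intro i x hx z hz
    have h := (lipschitzWith_piecewise (hw i) hu (hwu i)).dist_le_mul x z
    rwa [piecewise_eq_of_mem _ _ _ hx, piecewise_eq_of_notMem _ _ _ (mt (mem_iUnion_of_mem i) hz),
      ← hvw i hx, ← hvu hz] at h
  refine ⟨v, ⟨LipschitzWith.of_dist_le_mul fun x y ↦ ?_, hvu, fun x ↦ ?_⟩, hvw⟩
  · by_cases hx : x ∈ ⋃ i, P i <;> by_cases hy : y ∈ ⋃ i, P i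
    · obtain ⟨i, hi⟩ := mem_iUnion.1 hx
      obtain ⟨j, hj⟩ := mem_iUnion.1 hy
      by_cases hyi : y ∈ P i
      · rw [hvw i hi, hvw i hyi]
        exact (hw i).dist_le_mul x y
      · obtain ⟨z, hz, hzi⟩ := nonempty_segment_inter_frontier hi hyi
        have hzP : z ∉ ⋃ i, P i := disjoint_left.1 (disjoint_frontier_iUnion hP hd i) hzi
        refine dist_le_mul_of_mem_segment hz (hlocal i x hi z hzP) ?_
        simpa only [dist_comm] using hlocal j y hj z hzP
    · obtain ⟨i, hi⟩ := mem_iUnion.1 hx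
      exact hlocal i x hi y hy
    · obtain ⟨j, hj⟩ := mem_iUnion.1 hy
      simpa only [dist_comm] using hlocal j y hj x hx
    · rw [hvu hx, hvu hy]
      exact hu.dist_le_mul x y
  · by_cases hx : x ∈ ⋃ i, P i
    · obtain ⟨i, hi⟩ := mem_iUnion.1 hx
      rw [hvw i hi]
      exact hdist i x hi
    · rwa [hvu hx, dist_self]

end Gluing

section RescaledCopies

variable {E : Type*} [NormedAddCommGroup E] [NormedSpace ℝ E]

/-- The affine map `y ↦ r⁻¹ • (y - a)` attached to `p = (a, r)`. The copy of a set `P` translated by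
`a` and dilated by `r` is `rescale p ⁻¹' P`, and the rescaled copy of a function `f` on `P` is
`r • f ∘ rescale p`. -/
noncomputable def rescale (p : E × ℝ) (y : E) : E := p.2⁻¹ • (y - p.1)

theorem continuous_rescale (p : E × ℝ) : Continuous (rescale p) := by
  unfold rescale
  fun_prop

theorem preimage_rescale_closedBall {p : E × ℝ} (hp : 0 < p.2) (D : ℝ) :
    rescale p ⁻¹' closedBall 0 D = closedBall p.1 (p.2 * D) := by
  ext y
  simp only [rescale, mem_preimage, mem_closedBall, dist_eq_norm, sub_zero, norm_smul, norm_inv,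
    Real.norm_eq_abs, abs_of_pos hp, inv_mul_le_iff₀ hp]

/-- `t` indexes a packing of `Ω` by copies of `P` of scale at most `ε` (see `rescale`), which
exhausts `Ω` up to a null set. -/
structure IsRescaledPacking [MeasurableSpace E] (μ : Measure E) (P Ω : Set E) (ε : ℝ)
    (t : Set (E × ℝ)) : Prop where
  countable : t.Countable
  scale_mem : ∀ p ∈ t, p.2 ∈ Ioc 0 ε
  subset : ∀ p ∈ t, rescale p ⁻¹' P ⊆ Ω
  pairwiseDisjoint : t.PairwiseDisjoint fun p ↦ rescale p ⁻¹' P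
  measure_sdiff : μ (Ω \ ⋃ p ∈ t, rescale p ⁻¹' P) = 0

theorem IsRescaledPacking.disjoint_biUnion [MeasurableSpace E] {μ : Measure E} {P Ω S S' : Set E}
    {ε : ℝ} {t : Set (E × ℝ)} (ht : IsRescaledPacking μ P Ω ε t) (hS : S ⊆ P) (hS' : S' ⊆ P)
    (hSS' : Disjoint S S') :
    Disjoint (⋃ p ∈ t, rescale p ⁻¹' S) (⋃ p ∈ t, rescale p ⁻¹' S') := by
  simp only [disjoint_iUnion_left, disjoint_iUnion_right]
  intro q hq p hp
  rcases eq_or_ne p q with rfl | hpq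
  · exact hSS'.preimage _
  · exact (ht.pairwiseDisjoint hp hq hpq).mono (preimage_mono hS) (preimage_mono hS')

variable [FiniteDimensional ℝ E] [MeasurableSpace E] [BorelSpace E] (μ : Measure E)
  [μ.IsAddHaarMeasure]

theorem addHaar_preimage_rescale {p : E × ℝ} (hp : 0 < p.2) (S : Set E) :
    μ (rescale p ⁻¹' S) = ENNReal.ofReal (p.2 ^ Module.finrank ℝ E) * μ S := by
  have hcomp : rescale p ⁻¹' S = (fun y ↦ y + -p.1) ⁻¹' ((fun y ↦ p.2⁻¹ • y) ⁻¹' S) := by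
    ext y
    simp only [rescale, mem_preimage, sub_eq_add_neg]
  rw [hcomp, measure_preimage_add_right, Measure.addHaar_preimage_smul _ (inv_ne_zero hp.ne'),
    inv_pow, inv_inv, abs_of_pos (pow_pos hp _)]

variable {μ} {P Ω : Set E} {ε : ℝ}

theorem IsRescaledPacking.addHaar_iUnion {t : Set (E × ℝ)} (ht : IsRescaledPacking μ P Ω ε t)
    (hP : MeasurableSet P) {S : Set E} (hS : MeasurableSet S) (hSP : S ⊆ P) {c : ℝ≥0∞}
    (hc : μ S = c * μ P) : μ (⋃ p ∈ t, rescale p ⁻¹' S) = c * μ Ω := by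
  have hmeas (p : E × ℝ) : Measurable (rescale p) := (continuous_rescale p).measurable
  have hΩ : μ (⋃ p ∈ t, rescale p ⁻¹' P) = μ Ω :=
    (measure_mono (iUnion₂_subset ht.subset)).antisymm
      (measure_mono_ae (ae_le_set.2 ht.measure_sdiff))
  have hcopy (p : t) : μ (rescale p.1 ⁻¹' S) = c * μ (rescale p.1 ⁻¹' P) := by
    rw [addHaar_preimage_rescale μ (ht.scale_mem p p.2).1,
      addHaar_preimage_rescale μ (ht.scale_mem p p.2).1, hc, mul_left_comm]
  rw [← hΩ, measure_biUnion ht.countable ht.pairwiseDisjoint fun p _ ↦ hmeas p hP,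
    measure_biUnion ht.countable (ht.pairwiseDisjoint.mono fun p ↦ preimage_mono hSP)
      fun p _ ↦ hmeas p hS, ← ENNReal.tsum_mul_left]
  exact tsum_congr hcopy

theorem IsRescaledPacking.of_measure_sdiff_eq_zero {t : Set (E × ℝ)}
    (ht : IsRescaledPacking μ P Ω ε t) {S : Set E} (hSP : S ⊆ P) (hS : μ (P \ S) = 0) :
    IsRescaledPacking μ S Ω ε t where
  countable := ht.countable
  scale_mem := ht.scale_mem
  subset p hp := (preimage_mono hSP).trans (ht.subset p hp)
  pairwiseDisjoint := ht.pairwiseDisjoint.mono fun _ ↦ preimage_mono hSP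
  measure_sdiff := by
    have hnull : μ (⋃ p ∈ t, rescale p ⁻¹' (P \ S)) = 0 :=
      (measure_biUnion_null_iff ht.countable).2 fun p hp ↦ by
        rw [addHaar_preimage_rescale μ (ht.scale_mem p hp).1, hS, mul_zero]
    refine measure_mono_null (fun y hy ↦ ?_) (measure_union_null ht.measure_sdiff hnull)
    by_cases h : y ∈ ⋃ p ∈ t, rescale p ⁻¹' P
    · obtain ⟨p, hp, hyp⟩ := mem_iUnion₂.1 h
      exact .inr (mem_iUnion₂.2 ⟨p, hp, hyp, fun hyS ↦ hy.2 (mem_iUnion₂.2 ⟨p, hp, hyS⟩)⟩)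
    · exact .inl ⟨hy.1, h⟩

variable (μ) in
theorem exists_isRescaledPacking (hPo : IsOpen P) (hPc : Convex ℝ P)
    (hPb : Bornology.IsBounded P) (hP0 : 0 ∈ P) (hΩ : IsOpen Ω) (hε : 0 < ε) :
    ∃ t, IsRescaledPacking μ P Ω ε t := by
  obtain ⟨D, hD, hPD⟩ := hPb.closure.subset_closedBall_lt 0 0
  let B (p : E × ℝ) : Set E := rescale p ⁻¹' closure P
  let T : Set (E × ℝ) := {p | p.2 ∈ Ioc 0 ε ∧ B p ⊆ Ω}
  have hPB (p : E × ℝ) : rescale p ⁻¹' P ⊆ B p := preimage_mono subset_closure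
  have hBball : ∀ p : E × ℝ, 0 < p.2 → B p ⊆ closedBall p.1 (p.2 * D) := fun p hp ↦
    preimage_rescale_closedBall hp D ▸ preimage_mono hPD
  have hdoubling : ∀ p ∈ T, μ (closedBall p.1 (3 * (p.2 * D))) ≤
      (μ (closedBall (0 : E) (3 * D)) / μ (closure P)).toNNReal * μ (B p) := fun p hp ↦ by
    have hpos : μ (closure P) ≠ 0 :=
      (hPo.measure_pos μ ⟨0, hP0⟩).ne' ∘ measure_mono_null subset_closure
    rw [ENNReal.coe_toNNReal (ENNReal.div_ne_top measure_closedBall_lt_top.ne hpos),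
      mul_left_comm, ← preimage_rescale_closedBall hp.1.1, addHaar_preimage_rescale μ hp.1.1,
      addHaar_preimage_rescale μ hp.1.1, mul_left_comm,
      ENNReal.div_mul_cancel hpos hPb.closure.measure_lt_top.ne]
  have hfine : ∀ x ∈ Ω, ∀ δ > 0, ∃ p ∈ T, p.2 * D ≤ δ ∧ p.1 = x := fun x hx δ hδ ↦ by
    obtain ⟨ρ, hρ, hρΩ⟩ := nhds_basis_closedBall.mem_iff.1 (hΩ.mem_nhds hx)
    have hr : 0 < min ε (min δ ρ / D) := by positivity
    have hrD : min ε (min δ ρ / D) * D ≤ min δ ρ :=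
      (le_div_iff₀ hD).1 (min_le_right _ _)
    exact ⟨(x, _), ⟨⟨hr, min_le_left _ _⟩, (hBball _ hr).trans
      ((closedBall_subset_closedBall (hrD.trans (min_le_right _ _))).trans hρΩ)⟩,
      hrD.trans (min_le_left _ _), rfl⟩
  obtain ⟨t, htT, htc, htd, ht0⟩ := Vitali.exists_disjoint_covering_ae μ Ω T _
    (fun p ↦ p.2 * D) Prod.fst B (fun p hp ↦ hBball p hp.1.1) hdoubling
    (fun p _ ↦ ⟨p.1, interior_maximal (hPB p) (hPo.preimage (continuous_rescale p))
      (by simpa only [mem_preimage, rescale, sub_self, smul_zero] using hP0)⟩)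
    (fun p _ ↦ isClosed_closure.preimage (continuous_rescale p)) hfine
  have hfrontier : μ (closure P \ P) = 0 := hPo.frontier_eq ▸ hPc.addHaar_frontier μ
  exact ⟨t, .of_measure_sdiff_eq_zero ⟨htc, fun p hp ↦ (htT hp).1, fun p hp ↦ (htT hp).2, htd, ht0⟩
    subset_closure hfrontier⟩

end RescaledCopies

section AdaptedFrame

variable {E J : Type*} [NormedAddCommGroup E] [NormedSpace ℝ E]

/-- A system of linear coordinates `φ, ψ` on `E`, where `c` is the vector dual to `φ`. -/
structure IsAdaptedFrame (φ : E →L[ℝ] ℝ) (c : E) (ψ : J → E →L[ℝ] ℝ) : Prop where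
  apply_self : φ c = 1
  apply_eq_zero : ∀ j, ψ j c = 0
  ne_zero : ∀ j, ψ j ≠ 0
  eq_zero : ∀ x, φ x = 0 → (∀ j, ψ j x = 0) → x = 0

theorem exists_isAdaptedFrame [FiniteDimensional ℝ E] {φ : E →L[ℝ] ℝ} (hφ : φ ≠ 0) {η : ℝ}
    (hη : 0 < η) : ∃ (m : ℕ) (c : E) (ψ : Fin m → E →L[ℝ] ℝ),
      IsAdaptedFrame φ c ψ ∧ ∑ j, ‖ψ j‖ ≤ η := by
  obtain ⟨c₀, hc₀⟩ : ∃ c₀, φ c₀ = 1 := φ.toLinearMap.surjective (by exact_mod_cast hφ) 1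
  obtain ⟨π, hπ⟩ := φ.toLinearMap.ker.subtype.exists_leftInverse_of_injective
    (Submodule.ker_subtype _)
  have hπ (y : φ.toLinearMap.ker) : π y = y := LinearMap.congr_fun hπ y
  let b := Module.finBasis ℝ φ.toLinearMap.ker
  let ψ (j) : E →L[ℝ] ℝ := LinearMap.toContinuousLinearMap (b.coord j ∘ₗ π)
  have hψ (j) (y : φ.toLinearMap.ker) : ψ j y = b.coord j y := by simp [ψ, hπ]
  let κ : ℝ := η / (1 + ∑ j, ‖ψ j‖)
  have hκ : 0 < κ := by positivity
  refine ⟨_, c₀ - π c₀, fun j ↦ κ • ψ j, ⟨?_, fun j ↦ ?_, fun j ↦ ?_, fun x hx hψx ↦ ?_⟩, ?_⟩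
  · rw [map_sub, hc₀, show φ (π c₀) = 0 from (π c₀).2, sub_zero]
  · simp [ψ, hπ]
  · intro h
    have h1 : κ * b.coord j (b j) = 0 := by rw [← hψ]; exact congr($h (b j))
    simp [hκ.ne'] at h1
  · lift x to φ.toLinearMap.ker using hx
    have hcoord (j) : b.coord j x = 0 :=
      hψ j x ▸ (mul_eq_zero.1 (hψx j)).resolve_left hκ.ne'
    exact congrArg Subtype.val (b.forall_coord_eq_zero_iff.1 hcoord)
  · simp only [norm_smul, ← Finset.mul_sum, Real.norm_of_nonneg hκ.le, κ]
    rw [div_mul_eq_mul_div, div_le_iff₀ (by positivity)]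
    nlinarith

variable {φ : E →L[ℝ] ℝ} {c : E} {ψ : J → E →L[ℝ] ℝ}

theorem IsAdaptedFrame.neg (h : IsAdaptedFrame φ c ψ) : IsAdaptedFrame (-φ) (-c) ψ where
  apply_self := by simp [h.apply_self]
  apply_eq_zero j := by simp [h.apply_eq_zero]
  ne_zero := h.ne_zero
  eq_zero x hx := h.eq_zero x (by simpa using hx)

theorem IsAdaptedFrame.isBounded [FiniteDimensional ℝ E] [Finite J]
    (h : IsAdaptedFrame φ c ψ) (R : ℝ) :
    Bornology.IsBounded {x | |φ x| ≤ R ∧ ∀ j, |ψ j x| ≤ R} := by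
  have := Fintype.ofFinite J
  let T : E →ₗ[ℝ] ℝ × (J → ℝ) := φ.toLinearMap.prod (LinearMap.pi fun j ↦ (ψ j).toLinearMap)
  have hT : LinearMap.ker T = ⊥ := LinearMap.ker_eq_bot'.2 fun x hx ↦
    h.eq_zero x congr(Prod.fst $hx) fun j ↦ congr(Prod.snd $hx j)
  obtain ⟨K, -, hK⟩ := T.exists_antilipschitzWith hT
  refine (hK.isBounded_preimage (isBounded_closedBall (x := 0) (r := max R 0))).subset
    fun x hx ↦ ?_
  rw [mem_preimage, mem_closedBall_zero_iff, Prod.norm_def, max_le_iff,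
    pi_norm_le_iff_of_nonneg (le_max_right _ _)]
  exact ⟨hx.1.trans (le_max_left _ _), fun j ↦ (hx.2 j).trans (le_max_left _ _)⟩

end AdaptedFrame

section Roof

variable {E J : Type*} [NormedAddCommGroup E] [NormedSpace ℝ E] [Fintype J]

/-- The concave piecewise affine function of height `1` at the origin which falls off with slopes
`s` and `t` on the two sides of the hyperplane `φ = 0`. The functionals `ψ`, meant to be small, make
it fall off in the remaining directions as well. -/
def roof (s t : ℝ) (φ : E →L[ℝ] ℝ) (ψ : J → E →L[ℝ] ℝ) (x : E) : ℝ :=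
  1 - max (s * φ x) (-(t * φ x)) - ∑ j, |ψ j x|

/-- The convex cell on which a roof is positive. -/
def roofCell (s t : ℝ) (φ : E →L[ℝ] ℝ) (ψ : J → E →L[ℝ] ℝ) : Set E :=
  {x | 0 < roof s t φ ψ x}

/-- The part of the cell of a roof where `φ > 0` and the roof is locally affine. The part where
`φ < 0` is `roofHalf t s (-φ) ψ`. -/
def roofHalf (s t : ℝ) (φ : E →L[ℝ] ℝ) (ψ : J → E →L[ℝ] ℝ) : Set E :=
  {x | x ∈ roofCell s t φ ψ ∧ 0 < φ x ∧ ∀ j, ψ j x ≠ 0}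

variable {s t : ℝ} {φ : E →L[ℝ] ℝ} {ψ : J → E →L[ℝ] ℝ}

theorem roof_neg : roof t s (-φ) ψ = roof s t φ ψ := by
  ext x
  simp only [roof, FunLike.coe_neg, Pi.neg_apply, mul_neg, neg_neg, max_comm]

theorem roofCell_neg : roofCell t s (-φ) ψ = roofCell s t φ ψ := by
  rw [roofCell, roof_neg, roofCell]

theorem roof_zero : roof s t φ ψ 0 = 1 := by
  simp [roof]

theorem roofHalf_subset : roofHalf s t φ ψ ⊆ roofCell s t φ ψ := fun _ hx ↦ hx.1

theorem roofHalf_neg_subset : roofHalf t s (-φ) ψ ⊆ roofCell s t φ ψ := fun _ hx ↦ by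
  rw [← roofCell_neg]
  exact hx.1

theorem disjoint_roofHalf : Disjoint (roofHalf s t φ ψ) (roofHalf t s (-φ) ψ) :=
  disjoint_left.2 fun x hx hx' ↦ by
    have h : 0 < -φ x := hx'.2.1
    linarith [hx.2.1]

theorem max_mul_nonneg (hs : 0 ≤ s) (ht : 0 ≤ t) (α : ℝ) : 0 ≤ max (s * α) (-(t * α)) := by
  rcases le_total 0 α with h | h
  · exact le_max_of_le_left (mul_nonneg hs h)
  · exact le_max_of_le_right (by nlinarith)

theorem roof_le_one (hs : 0 ≤ s) (ht : 0 ≤ t) (x : E) : roof s t φ ψ x ≤ 1 := by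
  have := Finset.sum_nonneg fun j (_ : j ∈ Finset.univ) ↦ abs_nonneg (ψ j x)
  rw [roof]
  linarith [max_mul_nonneg hs ht (φ x)]

theorem continuous_roof : Continuous (roof s t φ ψ) := by
  unfold roof
  fun_prop

theorem isOpen_roofCell : IsOpen (roofCell s t φ ψ) :=
  isOpen_lt continuous_const continuous_roof

theorem isOpen_roofHalf : IsOpen (roofHalf s t φ ψ) := by
  have h : IsOpen {x | ∀ j, ψ j x ≠ 0} := by
    simp only [ofPred_forall]
    exact isOpen_iInter_of_finite fun j ↦ isOpen_ne_fun (ψ j).continuous continuous_const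
  exact isOpen_roofCell.inter ((isOpen_lt continuous_const φ.continuous).inter h)

theorem convex_roofCell : Convex ℝ (roofCell s t φ ψ) := by
  have hmax : ConvexOn ℝ univ fun x ↦ max (s * φ x) (-(t * φ x)) :=
    ((s • φ).toLinearMap.convexOn convex_univ).sup ((-(t • φ)).toLinearMap.convexOn convex_univ)
  have hsum : ConvexOn ℝ univ (∑ j, fun x ↦ |ψ j x|) :=
    Finset.sum_induction _ (ConvexOn ℝ univ) (fun _ _ h h' ↦ h.add h')
      (convexOn_const 0 convex_univ)
      fun j _ ↦ convexOn_univ_norm.comp_linearMap (ψ j).toLinearMap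
  convert (hmax.add hsum).convex_lt 1 using 1
  ext x
  simp [roofCell, roof, sub_sub]

theorem IsAdaptedFrame.isBounded_roofCell [FiniteDimensional ℝ E] {c : E}
    (h : IsAdaptedFrame φ c ψ) (hs : 0 < s) (ht : 0 < t) :
    Bornology.IsBounded (roofCell s t φ ψ) := by
  refine (h.isBounded (max 1 (max s⁻¹ t⁻¹))).subset fun x hx ↦ ?_
  have hx : 0 < 1 - max (s * φ x) (-(t * φ x)) - ∑ j, |ψ j x| := hx
  have hsum := Finset.sum_nonneg fun j (_ : j ∈ Finset.univ) ↦ abs_nonneg (ψ j x)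
  refine ⟨le_max_of_le_right (abs_le'.2 ⟨le_max_of_le_left ?_, le_max_of_le_right ?_⟩),
    fun j ↦ le_max_of_le_left ?_⟩
  · rw [← one_div, le_div_iff₀' hs]
    linarith [le_max_left (s * φ x) (-(t * φ x))]
  · rw [← one_div, le_div_iff₀' ht]
    linarith [le_max_right (s * φ x) (-(t * φ x))]
  · linarith [max_mul_nonneg hs.le ht.le (φ x),
      Finset.single_le_sum (fun j _ ↦ abs_nonneg (ψ j x)) (Finset.mem_univ j)]

section Volume

variable [FiniteDimensional ℝ E] [MeasurableSpace E] [BorelSpace E] (μ : Measure E)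
  [μ.IsAddHaarMeasure] {c : E}

theorem addHaar_setOf_apply_eq_zero (hφ : φ ≠ 0) : μ {x | φ x = 0} = 0 :=
  Measure.addHaar_submodule μ φ.toLinearMap.ker
    fun h ↦ hφ (by exact_mod_cast LinearMap.ker_eq_top.1 h)

theorem IsAdaptedFrame.measure_roofCell_sdiff (h : IsAdaptedFrame φ c ψ) :
    μ (roofCell s t φ ψ \ (roofHalf s t φ ψ ∪ roofHalf t s (-φ) ψ)) = 0 := by
  have hφ : φ ≠ 0 := fun h0 ↦ by simpa [h0] using h.apply_self
  refine measure_mono_null (t := {x | φ x = 0} ∪ ⋃ j, {x | ψ j x = 0}) (fun x hx ↦ ?_)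
    (measure_union_null (addHaar_setOf_apply_eq_zero μ hφ)
      (measure_iUnion_null fun j ↦ addHaar_setOf_apply_eq_zero μ (h.ne_zero j)))
  by_contra hne
  simp only [mem_union, mem_iUnion, mem_ofPred_eq, not_or, not_exists] at hne
  rcases lt_or_gt_of_ne hne.1 with hneg | hpos
  · exact hx.2 (.inr ⟨by rw [roofCell_neg]; exact hx.1, neg_pos.2 hneg, hne.2⟩)
  · exact hx.2 (.inl ⟨hx.1, hpos, hne.2⟩)

theorem IsAdaptedFrame.mul_measure_roofHalf (h : IsAdaptedFrame φ c ψ) (hs : 0 < s) (ht : 0 < t) :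
    ENNReal.ofReal s * μ (roofHalf s t φ ψ) = ENNReal.ofReal t * μ (roofHalf t s (-φ) ψ) := by
  have hpos : 0 < s / t := div_pos hs ht
  -- `T` fixes `ker φ` and sends `c` to `-(s / t) • c`; it maps one half of the cell onto the other.
  let T : E →ₗ[ℝ] E := LinearMap.transvection φ.toLinearMap ((-(s / t) - 1) • c)
  have hTφ (x : E) : φ (T x) = -(s / t) * φ x := by
    simp [T, LinearMap.transvection.apply, h.apply_self]
    ring
  have hTψ (j : J) (x : E) : ψ j (T x) = ψ j x := by
    simp [T, LinearMap.transvection.apply, h.apply_eq_zero]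
  have hdet : LinearMap.det T = -(s / t) := by
    simp [T, LinearMap.transvection.det, h.apply_self]
  have hroof (x : E) (hx : 0 < φ x) : roof s t φ ψ (T x) = roof s t φ ψ x := by
    have hsx : 0 < s * φ x := mul_pos hs hx
    have hTx : 0 < s / t * φ x := mul_pos hpos hx
    simp only [roof, hTψ, hTφ]
    rw [max_eq_left (a := s * φ x) (by nlinarith), max_eq_right (by nlinarith)]
    field_simp
  have hpre : roofHalf s t φ ψ = T ⁻¹' roofHalf t s (-φ) ψ := by
    ext x
    have hsign : 0 < (-φ) (T x) ↔ 0 < φ x := by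
      simp only [FunLike.coe_neg, Pi.neg_apply, hTφ, neg_mul, neg_neg]
      exact mul_pos_iff_of_pos_left hpos
    simp only [roofHalf, roofCell, mem_preimage, mem_ofPred_eq, roof_neg, hsign, hTψ]
    exact and_congr_left fun hx ↦ by rw [hroof x hx.1]
  rw [hpre, Measure.addHaar_preimage_linearMap μ (hdet ▸ neg_ne_zero.2 hpos.ne'), hdet, ← mul_assoc,
    ← ENNReal.ofReal_mul hs.le, abs_inv, abs_neg, abs_of_pos hpos]
  congr 2
  field_simp

theorem IsAdaptedFrame.measure_roofHalf (h : IsAdaptedFrame φ c ψ) (hs : 0 < s) (ht : 0 < t)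
    (hst : s + t = 1) :
    μ (roofHalf s t φ ψ) = ENNReal.ofReal t * μ (roofCell s t φ ψ) := by
  have hcell : μ (roofCell s t φ ψ) = μ (roofHalf s t φ ψ) + μ (roofHalf t s (-φ) ψ) := by
    rw [← measure_union disjoint_roofHalf isOpen_roofHalf.measurableSet]
    exact (measure_mono_ae (ae_le_set.2 (h.measure_roofCell_sdiff μ))).antisymm
      (measure_mono (union_subset roofHalf_subset roofHalf_neg_subset))
  rw [hcell, mul_add, ← h.mul_measure_roofHalf μ hs ht, ← add_mul,
    ← ENNReal.ofReal_add ht.le hs.le, add_comm t, hst, ENNReal.ofReal_one, one_mul]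

end Volume

end Roof

section Tent

theorem exists_slope_max {p q : ℝ} (hpq : p ≤ q) (α β : ℝ) :
    ∃ σ ∈ Icc p q, max (q * α) (p * α) - max (q * β) (p * β) = σ * (α - β) := by
  wlog hβα : β < α generalizing α β
  · rcases (not_lt.1 hβα).eq_or_lt with rfl | hlt
    · exact ⟨p, left_mem_Icc.2 hpq, by ring⟩
    · obtain ⟨σ, hσ, h⟩ := this β α hlt
      exact ⟨σ, hσ, by linarith⟩
  have hpos : 0 < α - β := sub_pos.2 hβα
  refine ⟨(max (q * α) (p * α) - max (q * β) (p * β)) / (α - β),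
    ⟨(le_div_iff₀ hpos).2 ?_, (div_le_iff₀ hpos).2 ?_⟩, (div_mul_cancel₀ _ hpos.ne').symm⟩
  · rcases max_cases (q * α) (p * α) with h | h <;>
      rcases max_cases (q * β) (p * β) with h' | h' <;> nlinarith
  · rcases max_cases (q * α) (p * α) with h | h <;>
      rcases max_cases (q * β) (p * β) with h' | h' <;> nlinarith

theorem exists_eventually_abs_eq {X : Type*} [TopologicalSpace X] {f : X → ℝ} (hf : Continuous f)
    {x : X} (hx : f x ≠ 0) : ∃ τ : ℝ, |τ| ≤ 1 ∧ ∀ᶠ y in 𝓝 x, |f y| = τ * f y := by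
  rcases lt_or_gt_of_ne hx with h | h
  · refine ⟨-1, by simp, ?_⟩
    filter_upwards [hf.continuousAt.eventually_lt_const h] with y hy
    rw [abs_of_neg hy, neg_one_mul]
  · refine ⟨1, by simp, ?_⟩
    filter_upwards [hf.continuousAt.eventually_const_lt h] with y hy
    rw [abs_of_pos hy, one_mul]

variable {E J : Type*} [NormedAddCommGroup E] [NormedSpace ℝ E] [Fintype J] {s t : ℝ}
  {φ : E →L[ℝ] ℝ} {ψ : J → E →L[ℝ] ℝ}

theorem exists_slope_roof (hst : 0 ≤ s + t) (x y : E) :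
    ∃ σ ∈ Icc (-t) s,
      |roof s t φ ψ x - roof s t φ ψ y + σ * φ (x - y)| ≤ (∑ j, ‖ψ j‖) * ‖x - y‖ := by
  obtain ⟨σ, hσ, hmax⟩ := exists_slope_max (by linarith : -t ≤ s) (φ x) (φ y)
  refine ⟨σ, hσ, ?_⟩
  have hroof : roof s t φ ψ x - roof s t φ ψ y + σ * φ (x - y) =
      ∑ j, (|ψ j y| - |ψ j x|) := by
    simp only [roof, Finset.sum_sub_distrib, map_sub, ← neg_mul]
    linarith
  rw [hroof, Finset.sum_mul]
  refine (Finset.abs_sum_le_sum_abs _ _).trans (Finset.sum_le_sum fun j _ ↦ ?_)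
  rw [norm_sub_rev]
  exact (abs_abs_sub_abs_le _ _).trans (map_sub (ψ j) y x ▸ (ψ j).le_opNorm (y - x))

theorem exists_eventually_roof_eq {x : E} (hx : x ∈ roofHalf s t φ ψ) (hst : 0 ≤ s + t) :
    ∃ χ : E →L[ℝ] ℝ, ‖χ + s • φ‖ ≤ ∑ j, ‖ψ j‖ ∧ ∀ᶠ y in 𝓝 x, roof s t φ ψ y = 1 + χ y := by
  choose τ hτ hτψ using fun j ↦ exists_eventually_abs_eq (ψ j).continuous (hx.2.2 j)
  refine ⟨-(s • φ) - ∑ j, τ j • ψ j, ?_, ?_⟩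
  · rw [sub_add_eq_add_sub, neg_add_cancel, zero_sub, norm_neg]
    refine norm_sum_le_of_le _ fun j _ ↦ ?_
    rw [norm_smul]
    exact mul_le_of_le_one_left (norm_nonneg _) (hτ j)
  · filter_upwards [eventually_all.2 hτψ, φ.continuous.continuousAt.eventually_const_lt hx.2.1]
      with y hψy hφy
    have hmax : max (s * φ y) (-(t * φ y)) = s * φ y := max_eq_left (by nlinarith)
    simp [roof, hmax, hψy]
    ring

/-- The roof placed on the copy `rescale p ⁻¹' roofCell s t φ ψ` of its cell, extended by zero. -/
noncomputable def tent (s t : ℝ) (φ : E →L[ℝ] ℝ) (ψ : J → E →L[ℝ] ℝ) (p : E × ℝ) (y : E) : ℝ :=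
  p.2 * max (roof s t φ ψ (rescale p y)) 0

variable {p : E × ℝ}

theorem tent_neg : tent t s (-φ) ψ = tent s t φ ψ := by
  ext p y
  rw [tent, roof_neg, tent]

theorem tent_of_notMem {y : E} (hy : y ∉ rescale p ⁻¹' roofCell s t φ ψ) :
    tent s t φ ψ p y = 0 := by
  rw [tent, max_eq_right (not_lt.1 hy), mul_zero]

theorem abs_tent_le (hs : 0 ≤ s) (ht : 0 ≤ t) (hp : 0 ≤ p.2) (y : E) :
    |tent s t φ ψ p y| ≤ p.2 := by
  rw [tent, abs_of_nonneg (by positivity)]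
  exact mul_le_of_le_one_right hp (max_le (roof_le_one hs ht _) zero_le_one)

theorem exists_slope_tent (hs : 0 ≤ s) (ht : 0 ≤ t) (hp : 0 < p.2) (x y : E) :
    ∃ θ ∈ Icc (-t) s,
      |tent s t φ ψ p x - tent s t φ ψ p y + θ * φ (x - y)| ≤ (∑ j, ‖ψ j‖) * ‖x - y‖ := by
  obtain ⟨τ, ⟨hτ0, hτ1⟩, hτ⟩ := exists_slope_max zero_le_one
    (roof s t φ ψ (rescale p x)) (roof s t φ ψ (rescale p y))
  simp only [one_mul, zero_mul] at hτ
  obtain ⟨σ, ⟨hσt, hσs⟩, hσ⟩ := exists_slope_roof (φ := φ) (ψ := ψ) (add_nonneg hs ht)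
    (rescale p x) (rescale p y)
  have hxy : rescale p x - rescale p y = p.2⁻¹ • (x - y) := by
    rw [rescale, rescale, ← smul_sub, sub_sub_sub_cancel_right]
  rw [hxy, map_smul, norm_smul, norm_inv, Real.norm_of_nonneg hp.le] at hσ
  refine ⟨τ * σ, ⟨by nlinarith, by nlinarith⟩, ?_⟩
  have htent : tent s t φ ψ p x - tent s t φ ψ p y + τ * σ * φ (x - y) =
      p.2 * τ * (roof s t φ ψ (rescale p x) - roof s t φ ψ (rescale p y) +
        σ * p.2⁻¹ • φ (x - y)) := by
    rw [tent, tent, ← mul_sub, hτ, smul_eq_mul]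
    field_simp
  rw [htent, abs_mul, abs_of_nonneg (by positivity)]
  calc p.2 * τ * |_| ≤ p.2 * 1 * ((∑ j, ‖ψ j‖) * (p.2⁻¹ * ‖x - y‖)) := by gcongr
    _ = (∑ j, ‖ψ j‖) * ‖x - y‖ := by field_simp

theorem exists_eventually_tent_eq (hst : 0 ≤ s + t) (hp : 0 < p.2) {x : E}
    (hx : x ∈ rescale p ⁻¹' roofHalf s t φ ψ) :
    ∃ (χ : E →L[ℝ] ℝ) (d : ℝ), ‖χ + s • φ‖ ≤ ∑ j, ‖ψ j‖ ∧
      ∀ᶠ y in 𝓝 x, tent s t φ ψ p y = χ y + d := by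
  obtain ⟨χ, hχ, hroof⟩ := exists_eventually_roof_eq hx hst
  refine ⟨χ, p.2 - χ p.1, hχ, ?_⟩
  have hrescale : Tendsto (rescale p) (𝓝 x) (𝓝 (rescale p x)) := (continuous_rescale p).tendsto x
  filter_upwards [hrescale.eventually hroof,
    hrescale.eventually (isOpen_roofCell.mem_nhds hx.1)] with y hy hpos
  rw [tent, max_eq_left hpos.le, hy, rescale, map_smul, map_sub, smul_eq_mul]
  field_simp
  ring

end Tent

section LocallyAffine

variable {E F : Type*} [NormedAddCommGroup E] [NormedSpace ℝ E] [NormedAddCommGroup F]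
  [NormedSpace ℝ F]

/-- Near `x` the map `u` is affine, with gradient in `U`. -/
def AffineNear (U : Set (E →L[ℝ] F)) (u : E → F) (x : E) : Prop :=
  ∃ A ∈ U, ∃ d : F, u =ᶠ[𝓝 x] fun y ↦ A y + d

variable {U V : Set (E →L[ℝ] F)} {u v : E → F} {x : E}

theorem AffineNear.mono (h : AffineNear U u x) (hUV : U ⊆ V) : AffineNear V u x :=
  h.imp fun _ hA ↦ ⟨hUV hA.1, hA.2⟩

theorem AffineNear.congr (h : AffineNear U u x) (hvu : v =ᶠ[𝓝 x] u) : AffineNear U v x :=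
  h.imp fun _ hA ↦ ⟨hA.1, hA.2.imp fun _ hd ↦ hvu.trans hd⟩

theorem AffineNear.fderiv_mem (h : AffineNear U u x) : fderiv ℝ u x ∈ U := by
  obtain ⟨A, hA, d, hu⟩ := h
  rwa [hu.fderiv_eq, fderiv_add_const, A.fderiv]

theorem lipschitzWith_apply_add_const {A : E →L[ℝ] F} {M : ℝ≥0} (hA : ‖A‖ ≤ M) (b : F) :
    LipschitzWith M fun y ↦ A y + b :=
  LipschitzWith.of_dist_le_mul fun x y ↦ by
    rw [dist_add_right]
    exact (A.lipschitz.weaken hA).dist_le_mul x y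

end LocallyAffine

section Laminate

variable {E F J : Type*} [NormedAddCommGroup E] [NormedSpace ℝ E] [NormedAddCommGroup F]
  [NormedSpace ℝ F] [Fintype J] {s t : ℝ} {φ : E →L[ℝ] ℝ} {ψ : J → E →L[ℝ] ℝ} {p : E × ℝ}
  {a b : F} {η : ℝ} {M : ℝ≥0}

theorem affineNear_add_tent_smul (hst : 0 ≤ s + t) (hψ : (∑ j, ‖ψ j‖) * ‖a‖ ≤ η) (hp : 0 < p.2)
    (C : E →L[ℝ] F) {x : E} (hx : x ∈ rescale p ⁻¹' roofHalf s t φ ψ) :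
    AffineNear (closedBall (C - s • φ.smulRight a) η)
      (fun y ↦ C y + b + tent s t φ ψ p y • a) x := by
  obtain ⟨χ, d, hχ, htent⟩ := exists_eventually_tent_eq hst hp hx
  refine ⟨C + χ.smulRight a, ?_, b + d • a, ?_⟩
  · have hdiff : C + χ.smulRight a - (C - s • φ.smulRight a) = (χ + s • φ).smulRight a := by
      ext y
      simp only [FunLike.coe_sub, FunLike.coe_add, FunLike.coe_smul, Pi.sub_apply, Pi.add_apply,
        Pi.smul_apply, ContinuousLinearMap.smulRight_apply, smul_eq_mul]
      module
    rw [mem_closedBall_iff_norm, hdiff, ContinuousLinearMap.norm_smulRight_apply]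
    exact (mul_le_mul_of_nonneg_right hχ (norm_nonneg a)).trans hψ
  · filter_upwards [htent] with y hy
    simp only [hy, FunLike.coe_add, Pi.add_apply, ContinuousLinearMap.smulRight_apply]
    module

theorem affineNear_of_eqOn_tent {T : Set (E × ℝ)} {u : E → F} {C : E →L[ℝ] F} (hst : 0 ≤ s + t)
    (hψ : (∑ j, ‖ψ j‖) * ‖a‖ ≤ η) (hT : ∀ p ∈ T, 0 < p.2)
    (hu : ∀ p ∈ T, EqOn u (fun y ↦ C y + b + tent s t φ ψ p y • a)
      (rescale p ⁻¹' roofCell s t φ ψ)) :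
    ∀ x ∈ ⋃ p ∈ T, rescale p ⁻¹' roofHalf s t φ ψ,
      AffineNear (closedBall (C - s • φ.smulRight a) η) u x := fun x hx ↦ by
  obtain ⟨p, hp, hxp⟩ := mem_iUnion₂.1 hx
  exact (affineNear_add_tent_smul hst hψ (hT p hp) C hxp).congr <| (hu p hp).eventuallyEq_of_mem
    ((isOpen_roofCell.preimage (continuous_rescale p)).mem_nhds (roofHalf_subset hxp))

variable {A B : E →L[ℝ] F}

theorem norm_smul_add_smul_le (hs : 0 ≤ s) (ht : 0 ≤ t) (hst : s + t = 1) {R : ℝ} (hA : ‖A‖ ≤ R)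
    (hB : ‖B‖ ≤ R) : ‖s • A + t • B‖ ≤ R :=
  mem_closedBall_zero_iff.1 (convex_closedBall 0 R (mem_closedBall_zero_iff.2 hA)
    (mem_closedBall_zero_iff.2 hB) hs ht hst)

theorem lipschitzWith_add_tent_smul (hs : 0 ≤ s) (ht : 0 ≤ t) (hst : s + t = 1)
    (hAB : A - B = φ.smulRight a) (hψ : (∑ j, ‖ψ j‖) * ‖a‖ ≤ η) (hA : ‖A‖ + η ≤ M)
    (hB : ‖B‖ + η ≤ M) (hp : 0 < p.2) :
    LipschitzWith M fun y ↦ (s • A + t • B) y + b + tent s t φ ψ p y • a := by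
  refine LipschitzWith.of_dist_le_mul fun x y ↦ ?_
  obtain ⟨θ, hθ, hslope⟩ := exists_slope_tent (φ := φ) (ψ := ψ) hs ht hp x y
  set e := tent s t φ ψ p x - tent s t φ ψ p y + θ * φ (x - y) with he
  have hsplit : (s • A + t • B) x + b + tent s t φ ψ p x • a -
      ((s • A + t • B) y + b + tent s t φ ψ p y • a) =
      ((s - θ) • A + (t + θ) • B) (x - y) + e • a := by
    have hAB' : A (x - y) - B (x - y) = φ (x - y) • a := congr($hAB (x - y))
    have h : ((s - θ) • A + (t + θ) • B) (x - y) =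
        (s • A + t • B) (x - y) - θ • φ (x - y) • a := by
      rw [← hAB']
      simp only [FunLike.coe_add, FunLike.coe_smul, Pi.add_apply, Pi.smul_apply]
      module
    rw [h, he, map_sub (s • A + t • B)]
    module
  have hcomb : ‖(s - θ) • A + (t + θ) • B‖ ≤ M - η :=
    norm_smul_add_smul_le (by linarith [hθ.2]) (by linarith [hθ.1]) (by linarith)
      (by linarith) (by linarith)
  rw [dist_eq_norm, dist_eq_norm, hsplit]
  calc ‖((s - θ) • A + (t + θ) • B) (x - y) + e • a‖
      ≤ ‖((s - θ) • A + (t + θ) • B) (x - y)‖ + ‖e • a‖ := norm_add_le _ _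
    _ ≤ (M - η) * ‖x - y‖ + (∑ j, ‖ψ j‖) * ‖x - y‖ * ‖a‖ := by
        rw [norm_smul]
        exact add_le_add (ContinuousLinearMap.le_of_opNorm_le _ hcomb _)
          (mul_le_mul_of_nonneg_right hslope (norm_nonneg a))
    _ ≤ M * ‖x - y‖ := by nlinarith [norm_nonneg (x - y)]

theorem exists_isPerturbation_tent [MeasurableSpace E] {μ : Measure E} {Ω : Set E} {ε δ : ℝ}
    {T : Set (E × ℝ)} (hT : IsRescaledPacking μ (roofCell s t φ ψ) Ω δ T) (hs : 0 ≤ s) (ht : 0 ≤ t)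
    (hst : s + t = 1) (hAB : A - B = φ.smulRight a) (hη : 0 ≤ η) (hψ : (∑ j, ‖ψ j‖) * ‖a‖ ≤ η)
    (hA : ‖A‖ + η ≤ M) (hB : ‖B‖ + η ≤ M) (hε : 0 ≤ ε) (hδ : δ * ‖a‖ ≤ ε) (b : F) :
    ∃ u, IsPerturbation M Ω ε (fun y ↦ (s • A + t • B) y + b) u ∧ ∀ p ∈ T,
      EqOn u (fun y ↦ (s • A + t • B) y + b + tent s t φ ψ p y • a)
        (rescale p ⁻¹' roofCell s t φ ψ) := by
  have hopen (p : E × ℝ) : IsOpen (rescale p ⁻¹' roofCell s t φ ψ) :=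
    isOpen_roofCell.preimage (continuous_rescale p)
  have hnorm : ‖s • A + t • B‖ ≤ M :=
    norm_smul_add_smul_le hs ht hst ((le_add_of_nonneg_right hη).trans hA)
      ((le_add_of_nonneg_right hη).trans hB)
  have hfrontier (p : E × ℝ) : EqOn (fun y ↦ (s • A + t • B) y + b + tent s t φ ψ p y • a)
      (fun y ↦ (s • A + t • B) y + b) (frontier (rescale p ⁻¹' roofCell s t φ ψ)) := fun y hy ↦ by
    rw [(hopen p).frontier_eq] at hy
    simp only [tent_of_notMem hy.2, zero_smul, add_zero]
  have hdist : ∀ p ∈ T, ∀ y, dist ((s • A + t • B) y + b + tent s t φ ψ p y • a)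
      ((s • A + t • B) y + b) ≤ ε := fun p hp y ↦ by
    obtain ⟨hpos, hpδ⟩ := hT.scale_mem p hp
    rw [dist_self_add_left, norm_smul]
    exact (mul_le_mul_of_nonneg_right ((abs_tent_le hs ht hpos.le y).trans hpδ)
      (norm_nonneg a)).trans hδ
  obtain ⟨u, hu, huT⟩ := exists_isPerturbation_iUnion
    (fun p : T ↦ hopen p) (fun p q hpq ↦ hT.pairwiseDisjoint p.2 q.2 (Subtype.coe_ne_coe.2 hpq))
    (lipschitzWith_apply_add_const hnorm b)
    (fun p ↦ lipschitzWith_add_tent_smul hs ht hst hAB hψ hA hB (hT.scale_mem p p.2).1)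
    (fun p ↦ hfrontier p) hε fun p y _ ↦ hdist p p.2 y
  exact ⟨u, hu.mono (iUnion_subset fun p ↦ hT.subset p p.2), fun p hp ↦ huT ⟨p, hp⟩⟩

/-- Up to a null set, `Ω` is the disjoint union of the open sets `V` and `W`, of volume fractions
`s` and `t`, on which `u` is locally affine with gradients `η`-close to `A` and `B` respectively. -/
structure IsLaminate [MeasurableSpace E] (μ : Measure E) (Ω : Set E) (A B : E →L[ℝ] F) (s t η : ℝ)
    (u : E → F) (V W : Set E) : Prop where
  isOpen_left : IsOpen V
  isOpen_right : IsOpen W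
  union_subset : V ∪ W ⊆ Ω
  disjoint : Disjoint V W
  measure_sdiff : μ (Ω \ (V ∪ W)) = 0
  measure_left : μ V = ENNReal.ofReal s * μ Ω
  measure_right : μ W = ENNReal.ofReal t * μ Ω
  affineNear_left : ∀ x ∈ V, AffineNear (closedBall A η) u x
  affineNear_right : ∀ x ∈ W, AffineNear (closedBall B η) u x

variable [FiniteDimensional ℝ E] [MeasurableSpace E] [BorelSpace E] {μ : Measure E}
  [μ.IsAddHaarMeasure] {Ω : Set E}

theorem IsRescaledPacking.isLaminate {δ : ℝ} {c : E} {T : Set (E × ℝ)} {u : E → F}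
    (hT : IsRescaledPacking μ (roofCell s t φ ψ) Ω δ T) (hframe : IsAdaptedFrame φ c ψ)
    (hs : 0 < s) (ht : 0 < t) (hst : s + t = 1) (hAB : A - B = φ.smulRight a)
    (hψ : (∑ j, ‖ψ j‖) * ‖a‖ ≤ η)
    (hu : ∀ p ∈ T, EqOn u (fun y ↦ (s • A + t • B) y + b + tent s t φ ψ p y • a)
      (rescale p ⁻¹' roofCell s t φ ψ)) :
    IsLaminate μ Ω A B s t η u (⋃ p ∈ T, rescale p ⁻¹' roofHalf t s (-φ) ψ)
      (⋃ p ∈ T, rescale p ⁻¹' roofHalf s t φ ψ) := by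
  have hA : s • A + t • B - t • (-φ).smulRight a = A := by
    have hneg : (-φ).smulRight a = B - A := by
      rw [← neg_sub, hAB]
      ext y
      simp only [ContinuousLinearMap.smulRight_apply, FunLike.coe_neg, Pi.neg_apply, neg_smul]
    rw [hneg, eq_sub_of_add_eq hst]
    module
  have hB : s • A + t • B - s • φ.smulRight a = B := by
    rw [← hAB, eq_sub_of_add_eq hst]
    module
  have hunion : (⋃ p ∈ T, rescale p ⁻¹' roofHalf t s (-φ) ψ) ∪
      (⋃ p ∈ T, rescale p ⁻¹' roofHalf s t φ ψ) =
      ⋃ p ∈ T, rescale p ⁻¹' (roofHalf s t φ ψ ∪ roofHalf t s (-φ) ψ) := by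
    simp only [preimage_union, iUnion_union_distrib, union_comm]
  have hhalves := hT.of_measure_sdiff_eq_zero
    (union_subset roofHalf_subset roofHalf_neg_subset) (hframe.measure_roofCell_sdiff μ)
  have hcell : MeasurableSet (roofCell s t φ ψ) := isOpen_roofCell.measurableSet
  have hopen (s' t' : ℝ) (φ' : E →L[ℝ] ℝ) : IsOpen (⋃ p ∈ T, rescale p ⁻¹' roofHalf s' t' φ' ψ) :=
    isOpen_biUnion fun p _ ↦ isOpen_roofHalf.preimage (continuous_rescale p)
  have hpos : ∀ p ∈ T, 0 < p.2 := fun p hp ↦ (hT.scale_mem p hp).1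
  exact
    { isOpen_left := hopen _ _ _
      isOpen_right := hopen _ _ _
      union_subset := hunion ▸ iUnion₂_subset hhalves.subset
      disjoint := hT.disjoint_biUnion roofHalf_neg_subset roofHalf_subset disjoint_roofHalf.symm
      measure_sdiff := hunion ▸ hhalves.measure_sdiff
      measure_left := hT.addHaar_iUnion hcell isOpen_roofHalf.measurableSet roofHalf_neg_subset
        (by simpa only [roofCell_neg] using hframe.neg.measure_roofHalf μ ht hs (by linarith))
      measure_right := hT.addHaar_iUnion hcell isOpen_roofHalf.measurableSet roofHalf_subset
        (hframe.measure_roofHalf μ hs ht hst)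
      affineNear_left := hA ▸ affineNear_of_eqOn_tent (by linarith) hψ hpos
        (by simpa only [tent_neg, roofCell_neg, hA] using hu)
      affineNear_right := hB ▸ affineNear_of_eqOn_tent (by linarith) hψ hpos
        (by simpa only [hB] using hu) }

variable (μ) in
theorem exists_isLaminate (hs : 0 < s) (ht : 0 < t) (hst : s + t = 1)
    (hAB : A - B = φ.smulRight a) (hφ : φ ≠ 0) (hη : 0 < η) (hA : ‖A‖ + η ≤ M) (hB : ‖B‖ + η ≤ M)
    {ε : ℝ} (hε : 0 < ε) (hΩ : IsOpen Ω) (b : F) :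
    ∃ u V W, IsPerturbation M Ω ε (fun y ↦ (s • A + t • B) y + b) u ∧
      IsLaminate μ Ω A B s t η u V W := by
  have hmul {r : ℝ} (hr : 0 < r) : r / (‖a‖ + 1) * ‖a‖ ≤ r := by
    rw [div_mul_eq_mul_div, div_le_iff₀ (by positivity)]
    nlinarith
  obtain ⟨m, c, ψ, hframe, hψ⟩ :=
    exists_isAdaptedFrame hφ (div_pos hη (by positivity : 0 < ‖a‖ + 1))
  replace hψ : (∑ j, ‖ψ j‖) * ‖a‖ ≤ η :=
    (mul_le_mul_of_nonneg_right hψ (norm_nonneg a)).trans (hmul hη)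
  obtain ⟨T, hT⟩ := exists_isRescaledPacking μ isOpen_roofCell convex_roofCell
    (hframe.isBounded_roofCell hs ht) (by simp [roofCell, roof_zero]) hΩ
    (div_pos hε (by positivity : 0 < ‖a‖ + 1))
  obtain ⟨u, hu, huT⟩ := exists_isPerturbation_tent hT hs.le ht.le hst hAB hη.le hψ hA hB hε.le
    (hmul hε) b
  exact ⟨u, _, _, hu, hT.isLaminate hframe hs ht hst hAB hψ huT⟩

end Laminate

section AffinePieces

variable {E F : Type*} [NormedAddCommGroup E] [NormedSpace ℝ E] [NormedAddCommGroup F]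
  [NormedSpace ℝ F] {U : Set (E →L[ℝ] F)} {V : Set E} {u : E → F}

/-- The points of `V` at which `u` has the germ of the affine map `x ↦ p.1 x + p.2`. -/
def affinePiece (V : Set E) (u : E → F) (p : (E →L[ℝ] F) × F) : Set E :=
  {x | x ∈ V ∧ u =ᶠ[𝓝 x] fun y ↦ p.1 y + p.2}

variable {p : (E →L[ℝ] F) × F}

theorem eqOn_affinePiece : EqOn u (fun y ↦ p.1 y + p.2) (affinePiece V u p) :=
  fun _ hx ↦ hx.2.self_of_nhds

theorem fderiv_eq_of_mem_affinePiece {x : E} (hx : x ∈ affinePiece V u p) :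
    fderiv ℝ u x = p.1 := by
  rw [hx.2.fderiv_eq, fderiv_add_const, p.1.fderiv]

theorem isOpen_affinePiece (hV : IsOpen V) : IsOpen (affinePiece V u p) :=
  hV.inter isOpen_setOfPred_eventually_nhds

theorem pairwise_disjoint_affinePiece : Pairwise (Disjoint on affinePiece V u) := by
  refine fun p q hpq ↦ disjoint_left.2 fun x hp hq ↦ hpq ?_
  have h : p.1 = q.1 :=
    (fderiv_eq_of_mem_affinePiece hp).symm.trans (fderiv_eq_of_mem_affinePiece hq)
  have hx : p.1 x + p.2 = q.1 x + q.2 := (eqOn_affinePiece hp).symm.trans (eqOn_affinePiece hq)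
  rw [h, add_right_inj] at hx
  exact Prod.ext h hx

theorem countable_setOf_nonempty_affinePiece [TopologicalSpace.SeparableSpace E] (hV : IsOpen V) :
    {p | (affinePiece V u p).Nonempty}.Countable :=
  PairwiseDisjoint.countable_of_isOpen (pairwise_disjoint_affinePiece.set_pairwise _)
    (fun _ _ ↦ isOpen_affinePiece hV) fun _ ↦ id

theorem iUnion_affinePiece (h : ∀ x ∈ V, AffineNear U u x) :
    ⋃ p : {p | (affinePiece V u p).Nonempty}, affinePiece V u p = V := by
  refine (iUnion_subset fun p x hx ↦ hx.1).antisymm fun x hx ↦ ?_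
  obtain ⟨A, -, d, hu⟩ := h x hx
  exact mem_iUnion.2 ⟨⟨(A, d), x, hx, hu⟩, hx, hu⟩

theorem fst_mem_of_nonempty_affinePiece (h : ∀ x ∈ V, AffineNear U u x)
    (hp : (affinePiece V u p).Nonempty) : p.1 ∈ U := by
  obtain ⟨x, hx⟩ := hp
  exact fderiv_eq_of_mem_affinePiece hx ▸ (h x hx.1).fderiv_mem

end AffinePieces

section RelaxedEnergy

variable {E F : Type*} [NormedAddCommGroup E] [NormedSpace ℝ E] [NormedAddCommGroup F]
  [NormedSpace ℝ F] [MeasurableSpace E] {μ : Measure E} {U : Set (E →L[ℝ] F)}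
  {M : ℝ≥0} {f : (E →L[ℝ] F) → ℝ≥0∞} {Ω V W : Set E} {u v : E → F} {c e e' : ℝ≥0∞} {ε : ℝ}
  {A B : E →L[ℝ] F}

/-- Almost everywhere in `Ω` the map `u` is locally affine with gradient in `U`, and the integral
over `Ω` of the energy density `f` at its gradient is at most `e`. -/
structure HasEnergyLE (μ : Measure E) (U : Set (E →L[ℝ] F)) (f : (E →L[ℝ] F) → ℝ≥0∞) (Ω : Set E)
    (e : ℝ≥0∞) (u : E → F) : Prop where
  ae_affineNear : ∀ᵐ x ∂μ.restrict Ω, AffineNear U u x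
  lintegral_le : ∫⁻ x in Ω, f (fderiv ℝ u x) ∂μ ≤ e

theorem HasEnergyLE.mono (h : HasEnergyLE μ U f Ω e u) (he : e ≤ e') :
    HasEnergyLE μ U f Ω e' u :=
  ⟨h.ae_affineNear, h.lintegral_le.trans he⟩

theorem HasEnergyLE.congr [BorelSpace E] (h : HasEnergyLE μ U f Ω e u) (hΩ : IsOpen Ω)
    (hvu : EqOn v u Ω) : HasEnergyLE μ U f Ω e v := by
  have hnear : ∀ x ∈ Ω, v =ᶠ[𝓝 x] u := fun x hx ↦ hvu.eventuallyEq_of_mem (hΩ.mem_nhds hx)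
  refine ⟨?_, ?_⟩
  · filter_upwards [h.ae_affineNear, ae_restrict_mem hΩ.measurableSet] with x hx hxΩ
    exact hx.congr (hnear x hxΩ)
  · rw [setLIntegral_congr_fun hΩ.measurableSet fun x hx ↦ by rw [(hnear x hx).fderiv_eq]]
    exact h.lintegral_le

theorem HasEnergyLE.iUnion {ι : Type*} [Countable ι] {P : ι → Set E} {e : ι → ℝ≥0∞}
    (h : ∀ i, HasEnergyLE μ U f (P i) (e i) u) :
    HasEnergyLE μ U f (⋃ i, P i) (∑' i, e i) u where
  ae_affineNear := (ae_restrict_iUnion_iff _ _).2 fun i ↦ (h i).ae_affineNear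
  lintegral_le :=
    (lintegral_iUnion_le _ _).trans (ENNReal.tsum_le_tsum fun i ↦ (h i).lintegral_le)

theorem HasEnergyLE.union (hV : HasEnergyLE μ U f V e u) (hW : HasEnergyLE μ U f W e' u) :
    HasEnergyLE μ U f (V ∪ W) (e + e') u where
  ae_affineNear := (ae_restrict_union_iff _ _ _).2 ⟨hV.ae_affineNear, hW.ae_affineNear⟩
  lintegral_le :=
    (lintegral_union_le _ _ _).trans (add_le_add hV.lintegral_le hW.lintegral_le)

theorem HasEnergyLE.of_measure_sdiff_eq_zero (h : HasEnergyLE μ U f V e u) (hV : V ⊆ Ω)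
    (hΩ : μ (Ω \ V) = 0) : HasEnergyLE μ U f Ω e u := by
  have : μ.restrict Ω = μ.restrict V :=
    Measure.restrict_congr_set (hV.eventuallyLE.antisymm (ae_le_set.2 hΩ)).symm
  exact ⟨this ▸ h.ae_affineNear, this ▸ h.lintegral_le⟩

/-- Every affine map with gradient `A` can be perturbed on every open set, by arbitrarily little,
into an `M`-Lipschitz map which is locally affine with gradients in `U` and whose mean energy is at
most `c`. -/
def IsRelaxedBound (μ : Measure E) (U : Set (E →L[ℝ] F)) (M : ℝ≥0) (f : (E →L[ℝ] F) → ℝ≥0∞)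
    (A : E →L[ℝ] F) (c : ℝ≥0∞) : Prop :=
  ∀ Ω : Set E, IsOpen Ω → ∀ ε : ℝ, 0 < ε → ∀ b : F,
    ∃ u, IsPerturbation M Ω ε (fun x ↦ A x + b) u ∧ HasEnergyLE μ U f Ω (c * μ Ω) u

theorem isRelaxedBound_self (hA : A ∈ U) (hM : ‖A‖ ≤ M) : IsRelaxedBound μ U M f A (f A) := by
  intro Ω _ ε hε b
  refine ⟨fun x ↦ A x + b, ⟨lipschitzWith_apply_add_const hM b, fun _ _ ↦ rfl, fun x ↦ ?_⟩,
    .of_forall fun x ↦ ⟨A, hA, b, .rfl⟩, ?_⟩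
  · rw [dist_self]
    exact hε.le
  · simp only [fderiv_add_const, A.fderiv, setLIntegral_const, le_refl]

theorem IsRelaxedBound.mono {c' : ℝ≥0∞} (h : IsRelaxedBound μ U M f A c) (hc : c ≤ c') :
    IsRelaxedBound μ U M f A c' := fun Ω hΩ ε hε b ↦
  (h Ω hΩ ε hε b).imp fun _ hu ↦ ⟨hu.1, hu.2.mono (mul_le_mul_left hc _)⟩

theorem exists_isPerturbation_of_affineNear [TopologicalSpace.SeparableSpace E] [BorelSpace E]
    (hV : IsOpen V) (hu : LipschitzWith M u)
    (h : ∀ x ∈ V, AffineNear {A | IsRelaxedBound μ U M f A c} u x) (hε : 0 < ε) :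
    ∃ v, IsPerturbation M V ε u v ∧ HasEnergyLE μ U f V (c * μ V) v := by
  let T : Set ((E →L[ℝ] F) × F) := {p | (affinePiece V u p).Nonempty}
  have : Countable T := (countable_setOf_nonempty_affinePiece hV).to_subtype
  have hopen (p : T) : IsOpen (affinePiece V u p.1) := isOpen_affinePiece hV
  have hdisj : Pairwise (Disjoint on fun p : T ↦ affinePiece V u p.1) :=
    pairwise_disjoint_affinePiece.comp_of_injective Subtype.val_injective
  have hunion : ⋃ p : T, affinePiece V u p = V := iUnion_affinePiece h
  choose w hw hwe using fun p : T ↦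
    (fst_mem_of_nonempty_affinePiece h p.2 : IsRelaxedBound μ U M f p.1.1 c) _ (hopen p) ε hε p.1.2
  have hfrontier (p : T) : EqOn (w p) u (frontier (affinePiece V u p.1)) := fun x hx ↦ by
    rw [(hopen p).frontier_eq] at hx
    exact ((hw p).eqOn_compl hx.2).trans (eqOn_affinePiece.closure hu.continuous
      (p.1.1.continuous.add continuous_const) hx.1).symm
  obtain ⟨v, hv, hvw⟩ := exists_isPerturbation_iUnion hopen hdisj hu (fun p ↦ (hw p).lipschitzWith)
    hfrontier hε.le fun p x hx ↦ eqOn_affinePiece hx ▸ (hw p).dist_le x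
  have henergy := HasEnergyLE.iUnion fun p ↦ (hwe p).congr (hopen p) (hvw p)
  rw [ENNReal.tsum_mul_left, ← measure_iUnion hdisj fun p ↦ (hopen p).measurableSet, hunion]
    at henergy
  exact ⟨v, hunion ▸ hv, henergy⟩

theorem IsLaminate.exists_isPerturbation [TopologicalSpace.SeparableSpace E] [BorelSpace E]
    {s t η : ℝ} {a b : ℝ≥0∞} (h : IsLaminate μ Ω A B s t η u V W) (hu : LipschitzWith M u)
    (hA : ∀ A' ∈ closedBall A η, IsRelaxedBound μ U M f A' a)
    (hB : ∀ B' ∈ closedBall B η, IsRelaxedBound μ U M f B' b) (hε : 0 < ε) :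
    ∃ v, IsPerturbation M Ω ε u v ∧
      HasEnergyLE μ U f Ω ((ENNReal.ofReal s * a + ENNReal.ofReal t * b) * μ Ω) v := by
  obtain ⟨v, huv, hv⟩ := exists_isPerturbation_of_affineNear h.isOpen_left hu
    (fun x hx ↦ (h.affineNear_left x hx).mono hA) (half_pos hε)
  have hWV : W ⊆ Vᶜ := h.disjoint.symm.subset_compl_right
  have hVW : V ⊆ Wᶜ := h.disjoint.subset_compl_right
  obtain ⟨w, hvw, hw⟩ := exists_isPerturbation_of_affineNear h.isOpen_right huv.lipschitzWith
    (fun x hx ↦ ((h.affineNear_right x hx).mono hB).congr <|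
      (huv.eqOn_compl.mono hWV).eventuallyEq_of_mem (h.isOpen_right.mem_nhds hx)) (half_pos hε)
  refine ⟨w, ?_, ?_⟩
  · rw [← add_halves ε]
    exact (huv.mono (subset_union_left.trans h.union_subset)).trans hvw
      (subset_union_right.trans h.union_subset)
  · have henergy := ((hv.congr h.isOpen_left (hvw.eqOn_compl.mono hVW)).union
      hw).of_measure_sdiff_eq_zero h.union_subset h.measure_sdiff
    refine henergy.mono (le_of_eq ?_)
    rw [h.measure_left, h.measure_right]
    ring

/-- The upper semicontinuous envelope of the least mean energy of the perturbations admitted in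
`IsRelaxedBound`. -/
noncomputable def relaxedEnergy (μ : Measure E) (U : Set (E →L[ℝ] F)) (M : ℝ≥0)
    (f : (E →L[ℝ] F) → ℝ≥0∞) (A : E →L[ℝ] F) : ℝ≥0∞ :=
  sInf {c | ∀ᶠ A' in 𝓝 A, IsRelaxedBound μ U M f A' c}

theorem eventually_isRelaxedBound (h : relaxedEnergy μ U M f A < c) :
    ∀ᶠ A' in 𝓝 A, IsRelaxedBound μ U M f A' c := by
  obtain ⟨c', hc', hlt⟩ := sInf_lt_iff.1 h
  filter_upwards [hc'] with A' hA' using hA'.mono hlt.le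

theorem relaxedEnergy_le_self (hU : IsOpen U) (hM : ∀ A ∈ U, ‖A‖ ≤ M) (hA : A ∈ U)
    (hf : UpperSemicontinuousAt f A) : relaxedEnergy μ U M f A ≤ f A := by
  refine le_of_forall_gt_imp_ge_of_dense fun c hc ↦ sInf_le ?_
  filter_upwards [hf c hc, hU.mem_nhds hA] with A' hA' hA'U
  exact (isRelaxedBound_self hA'U (hM A' hA'U)).mono hA'.le

variable [FiniteDimensional ℝ E] [BorelSpace E] [μ.IsAddHaarMeasure] {s t : ℝ} {φ : E →L[ℝ] ℝ}
  {a : F}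

theorem isRelaxedBound_smul_add_smul (hs : 0 < s) (ht : 0 < t) (hst : s + t = 1)
    (hAB : A - B = φ.smulRight a) (hφ : φ ≠ 0) {η : ℝ} (hη : 0 < η) (hAM : ‖A‖ + η ≤ M)
    (hBM : ‖B‖ + η ≤ M) {α β : ℝ≥0∞}
    (hA : ∀ A' ∈ closedBall A η, IsRelaxedBound μ U M f A' α)
    (hB : ∀ B' ∈ closedBall B η, IsRelaxedBound μ U M f B' β) :
    IsRelaxedBound μ U M f (s • A + t • B) (ENNReal.ofReal s * α + ENNReal.ofReal t * β) := by
  intro Ω hΩ ε hε b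
  obtain ⟨u, V, W, hu, hlam⟩ :=
    exists_isLaminate μ hs ht hst hAB hφ hη hAM hBM (half_pos hε) hΩ b
  obtain ⟨v, hv, henergy⟩ :=
    hlam.exists_isPerturbation hu.lipschitzWith hA hB (half_pos hε)
  exact ⟨v, add_halves ε ▸ hu.trans hv Subset.rfl, henergy⟩

theorem relaxedEnergy_le_of_lt (hs : 0 < s) (ht : 0 < t) (hst : s + t = 1)
    (hAB : A - B = φ.smulRight a) (hφ : φ ≠ 0) (hA : ‖A‖ < M) (hB : ‖B‖ < M) {α β : ℝ≥0∞}
    (hα : relaxedEnergy μ U M f A < α) (hβ : relaxedEnergy μ U M f B < β) :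
    relaxedEnergy μ U M f (s • A + t • B) ≤ ENNReal.ofReal s * α + ENNReal.ofReal t * β := by
  have hradius {A : E →L[ℝ] F} {c : ℝ≥0∞} (hA : ‖A‖ < M) (hc : relaxedEnergy μ U M f A < c) :
      ∀ᶠ r in 𝓝[>] (0 : ℝ), closedBall A r ⊆ {A' | IsRelaxedBound μ U M f A' c} ∧ ‖A‖ + r ≤ M :=
    ((eventually_closedBall_subset (eventually_isRelaxedBound hc)).and <|
      (continuous_const_add ‖A‖).continuousAt.eventually_le_const (by simpa using hA)).filter_mono
        nhdsWithin_le_nhds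
  obtain ⟨r, ⟨⟨hAr, hAM⟩, hBr, hBM⟩, hr⟩ :=
    (((hradius hA hα).and (hradius hB hβ)).and self_mem_nhdsWithin).exists
  refine sInf_le ?_
  filter_upwards [closedBall_mem_nhds (s • A + t • B) (half_pos hr)] with C hC
  -- Translating `A` and `B` by `D` moves their combination to the nearby gradient `C`.
  let D : E →L[ℝ] F := C - (s • A + t • B)
  have hD : ‖D‖ ≤ r / 2 := mem_closedBall_iff_norm.1 hC
  have hball (A : E →L[ℝ] F) : closedBall (A + D) (r / 2) ⊆ closedBall A r :=
    closedBall_subset_closedBall' (by rw [dist_self_add_left]; linarith)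
  have hnorm {A : E →L[ℝ] F} (hA : ‖A‖ + r ≤ M) : ‖A + D‖ + r / 2 ≤ M := by
    linarith [norm_add_le A D]
  have hC : s • (A + D) + t • (B + D) = C := by
    simp only [D, eq_sub_of_add_eq hst]
    module
  rw [← hC]
  exact isRelaxedBound_smul_add_smul hs ht hst (by rwa [add_sub_add_right_eq_sub]) hφ
    (half_pos hr) (hnorm hAM) (hnorm hBM) (fun _ h ↦ hAr (hball A h)) fun _ h ↦ hBr (hball B h)

theorem relaxedEnergy_smul_add_smul_le (hs : 0 < s) (ht : 0 < t) (hst : s + t = 1)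
    (hAB : A - B = φ.smulRight a) (hφ : φ ≠ 0) (hA : ‖A‖ < M) (hB : ‖B‖ < M) :
    relaxedEnergy μ U M f (s • A + t • B) ≤
      ENNReal.ofReal s * relaxedEnergy μ U M f A + ENNReal.ofReal t * relaxedEnergy μ U M f B := by
  refine ENNReal.le_of_forall_pos_le_add fun κ hκ hfin ↦ ?_
  obtain ⟨hAfin, hBfin⟩ := ENNReal.add_lt_top.1 hfin
  have hlt {r : ℝ} (hr : 0 < r) {x : ℝ≥0∞} (hx : ENNReal.ofReal r * x < ∞) : x < x + κ :=
    ENNReal.lt_add_right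
      (ENNReal.lt_top_of_mul_ne_top_right hx.ne (ENNReal.ofReal_pos.2 hr).ne').ne
      (ENNReal.coe_pos.2 hκ).ne'
  refine (relaxedEnergy_le_of_lt hs ht hst hAB hφ hA hB (hlt hs hAfin) (hlt ht hBfin)).trans_eq ?_
  have hone : ENNReal.ofReal s + ENNReal.ofReal t = 1 := by
    rw [← ENNReal.ofReal_add hs.le ht.le, hst, ENNReal.ofReal_one]
  calc _ = ENNReal.ofReal s * relaxedEnergy μ U M f A + ENNReal.ofReal t * relaxedEnergy μ U M f B
        + (ENNReal.ofReal s + ENNReal.ofReal t) * κ := by ring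
    _ = _ := by rw [hone, one_mul]

end RelaxedEnergy

section RankOneConvexity

variable {N n : ℕ} {U : Set (Mat N n)} {g : Mat N n → ℝ≥0∞} {L : List (ℝ × Mat N n)}

/-- Convexity of `g` along the rank-one segments with endpoints in `U`. -/
def RankOneConvexOn (U : Set (Mat N n)) (g : Mat N n → ℝ≥0∞) : Prop :=
  ∀ A ∈ U, ∀ B ∈ U, (A - B).rank = 1 → ∀ s t : ℝ, 0 < s → 0 < t → s + t = 1 →
    g (s • A + t • B) ≤ ENNReal.ofReal s * g A + ENNReal.ofReal t * g B

theorem HIProp.snd_mem (h : HIProp U L) : ∀ p ∈ L, p.2 ∈ U := by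
  induction h with
  | single l ξ hξ => simpa using hξ
  | pair l₁ l₂ ξ₁ ξ₂ h₁ h₂ _ => simpa using ⟨h₁, h₂⟩
  | step L rest l₁ l₂ ξ₁ ξ₂ hperm _ h₁ h₂ _ _ ih =>
    intro p hp
    rcases List.mem_cons.1 (hperm.mem_iff.1 hp) with rfl | hp
    · exact h₁
    · rcases List.mem_cons.1 hp with rfl | hp
      · exact h₂
      · exact ih p (List.mem_cons_of_mem _ hp)

theorem RankOneConvexOn.mul_le (hg : RankOneConvexOn U g) {A B : Mat N n} (hA : A ∈ U)
    (hB : B ∈ U) (hrank : (A - B).rank = 1) {s t : ℝ} (hs : 0 < s) (ht : 0 < t) :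
    ENNReal.ofReal (s + t) * g ((s + t)⁻¹ • (s • A + t • B)) ≤
      ENNReal.ofReal s * g A + ENNReal.ofReal t * g B := by
  have hpos : 0 < s + t := add_pos hs ht
  have hmul (r : ℝ) :
      ENNReal.ofReal (s + t) * ENNReal.ofReal ((s + t)⁻¹ * r) = ENNReal.ofReal r := by
    rw [← ENNReal.ofReal_mul hpos.le, mul_inv_cancel_left₀ hpos.ne']
  have h := hg A hA B hB hrank ((s + t)⁻¹ * s) ((s + t)⁻¹ * t) (by positivity) (by positivity)
    (by rw [← mul_add, inv_mul_cancel₀ hpos.ne'])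
  rw [smul_add, smul_smul, smul_smul]
  refine (mul_le_mul_right h _).trans_eq ?_
  rw [mul_add, ← mul_assoc, ← mul_assoc, hmul, hmul]

theorem HIProp.map_sum_le (h : HIProp U L) (hg : RankOneConvexOn U g)
    (hpos : ∀ p ∈ L, 0 < p.1) (hsum : (L.map Prod.fst).sum = 1) :
    g (L.map fun p ↦ p.1 • p.2).sum ≤ (L.map fun p ↦ ENNReal.ofReal p.1 * g p.2).sum := by
  induction h with
  | single l ξ _ =>
    obtain rfl : l = 1 := by simpa using hsum
    simp
  | pair l₁ l₂ ξ₁ ξ₂ h₁ h₂ hrank =>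
    simp only [List.map_cons, List.map_nil, List.sum_cons, List.sum_nil, add_zero] at hsum ⊢
    exact hg ξ₁ h₁ ξ₂ h₂ hrank l₁ l₂ (hpos (l₁, ξ₁) (by simp)) (hpos (l₂, ξ₂) (by simp)) hsum
  | step L rest l₁ l₂ ξ₁ ξ₂ hperm _ h₁ h₂ hrank _ ih =>
    have hl₁ : 0 < l₁ := hpos (l₁, ξ₁) (hperm.mem_iff.2 (by simp))
    have hl₂ : 0 < l₂ := hpos (l₂, ξ₂) (hperm.mem_iff.2 (by simp))
    have hl : 0 < l₁ + l₂ := add_pos hl₁ hl₂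
    rw [(hperm.map _).sum_eq] at hsum ⊢
    rw [(hperm.map _).sum_eq]
    simp only [List.map_cons, List.sum_cons, ← add_assoc] at hsum ih ⊢
    rw [smul_inv_smul₀ hl.ne'] at ih
    refine (ih ?_ hsum).trans (add_le_add_left (hg.mul_le h₁ h₂ hrank hl₁ hl₂) _)
    intro p hp
    rcases List.mem_cons.1 hp with rfl | hp
    · exact hl
    · exact hpos p (hperm.mem_iff.2 (by simp [hp]))

theorem SatisfiesH.map_sum_le {I : ℕ} {l : Fin I → ℝ} {ξ : Fin I → Mat N n}
    (h : SatisfiesH U I l ξ) (hg : RankOneConvexOn U g) (hpos : ∀ i, 0 < l i)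
    (hsum : ∑ i, l i = 1) : g (∑ i, l i • ξ i) ≤ ∑ i, ENNReal.ofReal (l i) * g (ξ i) := by
  simpa [List.map_ofFn, List.sum_ofFn] using
    HIProp.map_sum_le h hg (by simpa [List.forall_mem_ofFn_iff] using hpos)
      (by simpa [List.map_ofFn, List.sum_ofFn] using hsum)

theorem SatisfiesH.mem {I : ℕ} {l : Fin I → ℝ} {ξ : Fin I → Mat N n} (h : SatisfiesH U I l ξ)
    (i : Fin I) : ξ i ∈ U :=
  HIProp.snd_mem h (l i, ξ i) (List.mem_ofFn.2 ⟨i, rfl⟩)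

end RankOneConvexity

theorem exists_eq_smulRight_of_finrank_range_eq_one {E F : Type*} [NormedAddCommGroup E]
    [NormedSpace ℝ E] [FiniteDimensional ℝ E] [NormedAddCommGroup F] [NormedSpace ℝ F]
    {A : E →L[ℝ] F} (hA : Module.finrank ℝ A.toLinearMap.range = 1) :
    ∃ φ : E →L[ℝ] ℝ, φ ≠ 0 ∧ ∃ a : F, A = φ.smulRight a := by
  let b := Module.basisUnique Unit hA
  let φ : E →L[ℝ] ℝ := (b.coord () ∘ₗ A.toLinearMap.rangeRestrict).toContinuousLinearMap
  have hφ : A = φ.smulRight (b () : F) := by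
    ext x
    have h := b.sum_repr (A.toLinearMap.rangeRestrict x)
    rw [Fintype.sum_unique] at h
    exact congr(($h : F)).symm
  refine ⟨φ, fun h0 ↦ ?_, b (), hφ⟩
  have hzero : A = 0 := by
    ext x
    simp [hφ, h0]
  rw [hzero, ContinuousLinearMap.toLinearMap_zero, LinearMap.range_zero, finrank_bot] at hA
  exact zero_ne_one hA

section MatrixGradients

variable {N n : ℕ} {U E : Set (Mat N n)}

/-- The identification of linear maps with their matrices in the standard bases. -/
noncomputable def matrixEquiv (N n : ℕ) : ((Fin n → ℝ) →L[ℝ] Fin N → ℝ) ≃L[ℝ] Mat N n :=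
  (LinearMap.toContinuousLinearMap.symm.trans LinearMap.toMatrix').toContinuousLinearEquiv

theorem matGrad_eq (u : (Fin n → ℝ) → Fin N → ℝ) (x : Fin n → ℝ) :
    matGrad u x = matrixEquiv N n (fderiv ℝ u x) := rfl

theorem matrixEquiv_symm_apply (A : Mat N n) (x : Fin n → ℝ) :
    (matrixEquiv N n).symm A x = A.mulVec x := rfl

theorem mulVec_matrixEquiv (A : (Fin n → ℝ) →L[ℝ] Fin N → ℝ) (x : Fin n → ℝ) :
    (matrixEquiv N n A).mulVec x = A x := by
  rw [← matrixEquiv_symm_apply, ContinuousLinearEquiv.symm_apply_apply]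

theorem exists_matrixEquiv_symm_eq_smulRight {A : Mat N n} (hA : A.rank = 1) :
    ∃ φ : (Fin n → ℝ) →L[ℝ] ℝ, φ ≠ 0 ∧ ∃ a, (matrixEquiv N n).symm A = φ.smulRight a :=
  exists_eq_smulRight_of_finrank_range_eq_one hA

theorem exists_norm_matrixEquiv_symm_lt (hU : Bornology.IsBounded U) :
    ∃ M : ℝ≥0, ∀ A ∈ U, ‖(matrixEquiv N n).symm A‖ < M := by
  obtain ⟨R, hR, hUR⟩ := ((matrixEquiv N n).symm.lipschitz.isBounded_image hU).subset_ball_lt 0 0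
  exact ⟨⟨R, hR.le⟩, fun A hA ↦ mem_ball_zero_iff.1 (hUR (mem_image_of_mem _ hA))⟩

theorem piecewiseAffineOn_of_affineNear {Ω : Set (Fin n → ℝ)}
    {V : Set ((Fin n → ℝ) →L[ℝ] Fin N → ℝ)} {u : (Fin n → ℝ) → Fin N → ℝ} (hΩ : IsOpen Ω)
    (hu : Continuous u) (h : ∀ᵐ x ∂volume.restrict Ω, AffineNear V u x) :
    PiecewiseAffineOn u Ω := by
  let T : Set (((Fin n → ℝ) →L[ℝ] Fin N → ℝ) × (Fin N → ℝ)) := {p | (affinePiece Ω u p).Nonempty}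
  have : Countable T := (countable_setOf_nonempty_affinePiece hΩ).to_subtype
  have : Encodable T := Encodable.ofCountable T
  refine ⟨hu.continuousOn, fun k ↦ ⋃ p ∈ Encodable.decode₂ T k, affinePiece Ω u p.1, fun k ↦ ?_,
    fun k ↦ ?_, fun k l hkl ↦ ?_, ?_, fun k ↦ ?_⟩
  · exact Encodable.iUnion_decode₂_cases (C := IsOpen) isOpen_empty
      fun p ↦ isOpen_affinePiece hΩ
  · exact iUnion₂_subset fun p _ _ hx ↦ hx.1
  · exact Encodable.iUnion_decode₂_disjoint_on
      (pairwise_disjoint_affinePiece.comp_of_injective Subtype.val_injective) hkl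
  · rw [Encodable.iUnion_decode₂, ← ae_le_set]
    filter_upwards [(ae_restrict_iff' hΩ.measurableSet).1 h] with x hx (hxΩ : x ∈ Ω)
    obtain ⟨A, -, d, hd⟩ := hx hxΩ
    exact mem_iUnion.2 ⟨⟨(A, d), x, hxΩ, hd⟩, hxΩ, hd⟩
  · refine Encodable.iUnion_decode₂_cases (C := AffineOn u) ⟨0, 0, fun x hx ↦ hx.elim⟩
      fun p ↦ ⟨matrixEquiv N n p.1.1, p.1.2, fun x hx ↦ ?_⟩
    rw [mulVec_matrixEquiv]
    exact eqOn_affinePiece hx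

end MatrixGradients

section Relaxation

variable {N n : ℕ} {U E : Set (Mat N n)} {M : ℝ≥0}

theorem rankOneConvexOn_relaxedEnergy {V : Set ((Fin n → ℝ) →L[ℝ] Fin N → ℝ)}
    (f : ((Fin n → ℝ) →L[ℝ] Fin N → ℝ) → ℝ≥0∞) (hM : ∀ A ∈ U, ‖(matrixEquiv N n).symm A‖ < M) :
    RankOneConvexOn U fun A ↦ relaxedEnergy volume V M f ((matrixEquiv N n).symm A) := by
  intro A hA B hB hrank s t hs ht hst
  obtain ⟨φ, hφ, a, hAB⟩ := exists_matrixEquiv_symm_eq_smulRight hrank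
  rw [map_sub] at hAB
  simp only [map_add, map_smul]
  exact relaxedEnergy_smul_add_smul_le hs ht hst hAB hφ (hM A hA) (hM B hB)

/-- The energy density measuring the distance of a gradient to `E`. -/
noncomputable def gradDist (E : Set (Mat N n)) (A : (Fin n → ℝ) →L[ℝ] Fin N → ℝ) : ℝ≥0∞ :=
  ENNReal.ofReal (infDist (matrixEquiv N n A) E)

theorem continuous_gradDist : Continuous (gradDist E) :=
  ENNReal.continuous_ofReal.comp ((continuous_infDist_pt E).comp (matrixEquiv N n).continuous)

theorem norm_setIntegral_infDist_matGrad_le (u : (Fin n → ℝ) → Fin N → ℝ) {Ω : Set (Fin n → ℝ)}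
    {e : ℝ≥0∞} (he : e ≠ ∞) (hu : ∫⁻ x in Ω, gradDist E (fderiv ℝ u x) ≤ e) :
    ‖∫ x in Ω, infDist (matGrad u x) E‖ ≤ e.toReal := by
  rw [← toReal_enorm]
  refine ENNReal.toReal_mono he ((enorm_integral_le_lintegral_enorm _).trans (le_of_eq_of_le ?_ hu))
  simp only [Real.enorm_of_nonneg infDist_nonneg, matGrad_eq, gradDist]

theorem hasRelaxationProperty_of_relaxedEnergy_eq_zero
    (h : ∀ A ∈ U, relaxedEnergy volume (matrixEquiv N n ⁻¹' U) M (gradDist E)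
      ((matrixEquiv N n).symm A) = 0) : HasRelaxationProperty U E := by
  intro Ω hΩ hΩb ξ hξ b
  have hinv (ν : ℕ) : (0 : ℝ) < (ν + 1 : ℝ)⁻¹ := by positivity
  have hbound (ν : ℕ) := (eventually_isRelaxedBound (c := ENNReal.ofReal (ν + 1 : ℝ)⁻¹)
    (by rw [h ξ hξ]; exact ENNReal.ofReal_pos.2 (hinv ν))).self_of_nhds Ω hΩ _ (hinv ν) b
  choose u hu henergy using hbound
  have hlim : Tendsto (fun ν : ℕ ↦ (ν + 1 : ℝ)⁻¹) atTop (𝓝 0) := by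
    simpa using tendsto_one_div_add_atTop_nhds_zero_nat (𝕜 := ℝ)
  refine ⟨u, fun ν ↦ piecewiseAffineOn_of_affineNear hΩ (hu ν).lipschitzWith.continuous
      (henergy ν).ae_affineNear, fun ν ↦ ⟨⟨M, (hu ν).lipschitzWith.lipschitzOnWith⟩, ?_⟩,
    fun ν ↦ ?_, ⟨M, fun ν ↦ (hu ν).lipschitzWith.lipschitzOnWith⟩, ?_, ?_⟩
  · intro x hx
    rw [hΩ.frontier_eq] at hx
    exact (hu ν).eqOn_compl hx.2
  · filter_upwards [(henergy ν).ae_affineNear] with x hx using .inr hx.fderiv_mem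
  · refine Metric.tendstoUniformlyOn_iff.2 fun ε hε ↦ ?_
    filter_upwards [hlim.eventually_lt_const hε] with ν hν x _
    rw [dist_comm]
    exact ((hu ν).dist_le x).trans_lt hν
  · have hΩfin : volume Ω ≠ ∞ := hΩb.measure_lt_top.ne
    refine squeeze_zero_norm (fun ν ↦ norm_setIntegral_infDist_matGrad_le (u ν)
      (ENNReal.mul_ne_top ENNReal.ofReal_ne_top hΩfin) (henergy ν).lintegral_le) ?_
    simpa [ENNReal.toReal_mul, ENNReal.toReal_ofReal (hinv _).le] using
      hlim.mul_const (volume Ω).toReal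

theorem hasRelaxationProperty_of_forall_exists_satisfiesH (hUo : IsOpen U)
    (hUb : Bornology.IsBounded U)
    (h : ∀ ξ ∈ U, ∀ ε > 0, ∃ (I : ℕ) (l : Fin I → ℝ) (ξs : Fin I → Mat N n),
      (∀ i, 0 < l i) ∧ ∑ i, l i = 1 ∧ SatisfiesH U I l ξs ∧ ξ = ∑ i, l i • ξs i ∧
      ∑ i, l i * infDist (ξs i) E ≤ ε) :
    HasRelaxationProperty U E := by
  obtain ⟨M, hM⟩ := exists_norm_matrixEquiv_symm_lt hUb
  let g (A : Mat N n) : ℝ≥0∞ :=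
    relaxedEnergy volume (matrixEquiv N n ⁻¹' U) M (gradDist E) ((matrixEquiv N n).symm A)
  have hconvex : RankOneConvexOn U g := rankOneConvexOn_relaxedEnergy _ hM
  have hdist : ∀ A ∈ U, g A ≤ ENNReal.ofReal (infDist A E) := fun A hA ↦ by
    have hle := relaxedEnergy_le_self (μ := volume) (hUo.preimage (matrixEquiv N n).continuous)
      (fun B hB ↦ by simpa using (hM _ hB).le) (A := (matrixEquiv N n).symm A) (by simpa using hA)
      (continuous_gradDist (E := E)).continuousAt.upperSemicontinuousAt
    simpa only [gradDist, ContinuousLinearEquiv.apply_symm_apply] using hle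
  refine hasRelaxationProperty_of_relaxedEnergy_eq_zero (M := M) fun ξ hξ ↦ ?_
  refine nonpos_iff_eq_zero.1 (ENNReal.le_of_forall_pos_le_add fun ε hε _ ↦ ?_)
  obtain ⟨I, l, ξs, hl, hsum, hH, rfl, hle⟩ := h ξ hξ ε (NNReal.coe_pos.2 hε)
  calc g (∑ i, l i • ξs i) ≤ ∑ i, ENNReal.ofReal (l i) * g (ξs i) :=
        hH.map_sum_le hconvex hl hsum
    _ ≤ ∑ i, ENNReal.ofReal (l i) * ENNReal.ofReal (infDist (ξs i) E) := by
        gcongr with i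
        exact hdist _ (hH.mem i)
    _ = ENNReal.ofReal (∑ i, l i * infDist (ξs i) E) := by
        rw [ENNReal.ofReal_sum_of_nonneg fun i _ ↦ mul_nonneg (hl i).le infDist_nonneg]
        simp only [ENNReal.ofReal_mul (hl _).le]
    _ ≤ 0 + ε := by
        rw [zero_add, ← ENNReal.ofReal_coe_nnreal]
        exact ENNReal.ofReal_le_ofReal hle

theorem sum_mul_le_add_mul {ι : Type*} [Fintype ι] {p : ι → Prop} [DecidablePred p] {l d : ι → ℝ}
    {ε δ D : ℝ} (hl : ∀ i, 0 ≤ l i) (hsum : ∑ i, l i = 1) (hε : 0 ≤ ε) (hD : 0 ≤ D)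
    (hp : ∀ i, p i → d i ≤ ε) (hd : ∀ i, d i ≤ D)
    (hδ : ∑ i ∈ Finset.univ.filter (fun i ↦ ¬p i), l i ≤ δ) : ∑ i, l i * d i ≤ ε + δ * D := by
  have hterm (i : ι) : l i * d i ≤ l i * ε + (if ¬p i then l i else 0) * D := by
    split_ifs with h
    · linarith [mul_le_mul_of_nonneg_left (hp i h) (hl i)]
    · linarith [mul_le_mul_of_nonneg_left (hd i) (hl i), mul_nonneg (hl i) hε]
  calc ∑ i, l i * d i ≤ ∑ i, (l i * ε + (if ¬p i then l i else 0) * D) :=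
        Finset.sum_le_sum fun i _ ↦ hterm i
    _ = ε + (∑ i ∈ Finset.univ.filter (fun i ↦ ¬p i), l i) * D := by
        rw [Finset.sum_add_distrib, ← Finset.sum_mul, ← Finset.sum_mul, hsum, one_mul,
          Finset.sum_filter]
    _ ≤ ε + δ * D := by gcongr

theorem exists_forall_infDist_le (hU : Bornology.IsBounded U) (E : Set (Mat N n)) :
    ∃ D > 0, ∀ ξ ∈ U, infDist ξ E ≤ D := by
  obtain ⟨D, hD, hUD⟩ := ((lipschitz_infDist_pt E).isBounded_image hU).subset_ball_lt 0 0
  exact ⟨D, hD, fun ξ hξ ↦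
    (le_abs_self _).trans (mem_ball_zero_iff.1 (hUD (mem_image_of_mem _ hξ))).le⟩

theorem stmt1_general (hUo : IsOpen U) (hUb : Bornology.IsBounded U) (Eδ Kδ : ℝ → Set (Mat N n))
    (h1 : ∀ ε > 0, ∃ δ₀ > 0, ∀ δ ∈ Ioc (0 : ℝ) δ₀, ∀ η ∈ Eδ δ, infDist η E ≤ ε)
    (h2 : ∀ η ∈ U, ∃ δ₀ > 0, ∀ δ ∈ Ioc (0 : ℝ) δ₀, η ∈ Kδ δ)
    (h3 : ∀ δ > 0, ∀ ξ ∈ Kδ δ, ∃ (I : ℕ) (l : Fin I → ℝ) (ξs : Fin I → Mat N n),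
      (∀ i, 0 < l i) ∧ ∑ i, l i = 1 ∧ SatisfiesH U I l ξs ∧ ξ = ∑ i, l i • ξs i ∧
      ∑ i ∈ Finset.univ.filter (fun i ↦ ξs i ∉ Eδ δ), l i < δ) :
    HasRelaxationProperty U E := by
  obtain ⟨D, hD, hUD⟩ := exists_forall_infDist_le hUb E
  refine hasRelaxationProperty_of_forall_exists_satisfiesH hUo hUb fun ξ hξ ε hε ↦ ?_
  obtain ⟨δ₁, hδ₁, hE⟩ := h1 (ε / 2) (half_pos hε)
  obtain ⟨δ₂, hδ₂, hK⟩ := h2 ξ hξ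
  obtain ⟨δ, hδ, hδle⟩ : ∃ δ > 0, δ ≤ min (min δ₁ δ₂) (ε / 2 / D) := ⟨_, by positivity, le_rfl⟩
  simp only [le_min_iff] at hδle
  obtain ⟨I, l, ξs, hl, hsum, hH, hξs, hrest⟩ := h3 δ hδ ξ (hK δ ⟨hδ, hδle.1.2⟩)
  refine ⟨I, l, ξs, hl, hsum, hH, hξs, ?_⟩
  calc ∑ i, l i * infDist (ξs i) E ≤ ε / 2 + δ * D :=
        sum_mul_le_add_mul (fun i ↦ (hl i).le) hsum (half_pos hε).le hD.le
          (fun i ↦ hE δ ⟨hδ, hδle.1.1⟩ (ξs i)) (fun i ↦ hUD _ (hH.mem i)) hrest.le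
    _ ≤ ε / 2 + ε / 2 / D * D := by gcongr; exact hδle.2
    _ = ε := by rw [div_mul_cancel₀ _ hD.ne', add_halves]

end Relaxation

theorem stmt1 {N n : ℕ} (E K : Set (Mat N n))
    (hE : Bornology.IsBounded E) (hK : Bornology.IsBounded K)
    (Eδ Kδ : ℝ → Set (Mat N n))
    (h1 : ∀ ε > 0, ∃ δ₀ > 0, ∀ δ ∈ Set.Ioc (0:ℝ) δ₀, ∀ η ∈ Eδ δ, Metric.infDist η E ≤ ε)
    (h2 : ∀ η ∈ interior K, ∃ δ₀ > 0, ∀ δ ∈ Set.Ioc (0:ℝ) δ₀, η ∈ Kδ δ)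
    (h3 : ∀ δ > 0, ∀ ξ ∈ Kδ δ, ∃ (I : ℕ) (l : Fin I → ℝ) (ξs : Fin I → Mat N n),
      (∀ i, 0 < l i) ∧ ∑ i, l i = 1 ∧ SatisfiesH (interior K) I l ξs ∧
      ξ = ∑ i, l i • ξs i ∧
      ∑ i ∈ Finset.univ.filter (fun i => ξs i ∉ Eδ δ), l i < δ) :
    HasRelaxationProperty (interior K) E :=
  stmt1_general isOpen_interior (hK.subset interior_subset) Eδ Kδ h1 h2 h3

end Statements
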